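/- arXiv:1504.02625 — 2 statements merged into one kernel-verified Lean document; each statement's English description precedes it below -/
import Mathlib

section
/- The inclusion σ(T₁) ∪ σ(T₂) ⊆ σ_ess(T₁ + T₂) holds. -/
open MeasureTheory Complex

noncomputable section

/-- The measure on `ℝ` given by restricting Lebesgue measure to `[a,b]`. -/
abbrev muI (a b : ℝ) : MeasureTheory.Measure ℝ :=
  MeasureTheory.volume.restrict (Set.Icc a b)

/-- The discrete spectrum of a bounded operator: the set of isolated points of the
spectrum which are eigenvalues of finite multiplicity. -/
def discreteSpectrum {E : Type*} [NormedAddCommGroup E] [NormedSpace ℂ E]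
    (T : E →L[ℂ] E) : Set ℂ :=
  {z : ℂ | z ∈ spectrum ℂ T ∧ nhdsWithin z (spectrum ℂ T \ {z}) = ⊥ ∧
    LinearMap.ker (T - z • (1 : E →L[ℂ] E)).toLinearMap ≠ ⊥ ∧
    FiniteDimensional ℂ ↥(LinearMap.ker (T - z • (1 : E →L[ℂ] E)).toLinearMap)}

/-- The essential spectrum of a bounded operator: the complement of the discrete
spectrum in the spectrum. -/
def essentialSpectrum {E : Type*} [NormedAddCommGroup E] [NormedSpace ℂ E]
    (T : E →L[ℂ] E) : Set ℂ :=
  spectrum ℂ T \ discreteSpectrum T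

section AbstractPart
open scoped InnerProductSpace

/-- Isolated spectral points: bounded below on the complement of the kernel. -/
lemma aux_isolated {H : Type*} [NormedAddCommGroup H] [InnerProductSpace ℂ H] [CompleteSpace H]
    (T : H →L[ℂ] H) (hT : IsSelfAdjoint T) (z : ℂ)
    (hz : nhdsWithin z (spectrum ℂ T \ {z}) = ⊥) :
    ∃ S P : H →L[ℂ] H, S * (T - z • 1) = 1 - P ∧ (T - z • 1) * P = 0 := by
  classical
  have hU : ∃ U : Set ℂ, IsOpen U ∧ z ∈ U ∧ ∀ w ∈ U, w ∈ spectrum ℂ T → w = z := by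
    have h1 : (∅ : Set ℂ) ∈ nhdsWithin z (spectrum ℂ T \ {z}) := by rw [hz]; trivial
    obtain ⟨U, hUo, hzU, hU⟩ := mem_nhdsWithin.1 h1
    refine ⟨U, hUo, hzU, fun w hw hws => ?_⟩
    by_contra hne
    exact hU ⟨hw, hws, hne⟩
  obtain ⟨U, hUo, hzU, hU⟩ := hU
  have hN : IsStarNormal T := hT.isStarNormal
  have key : ∀ f : ℂ → ℂ, (∀ w, w ≠ z → ContinuousAt f w) → ContinuousOn f (spectrum ℂ T) := by
    intro f hf w hw
    by_cases h : w = z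
    · subst h
      have h2 : nhdsWithin w (spectrum ℂ T) ≤ pure w := by
        rw [Filter.le_pure_iff]
        exact mem_nhdsWithin.2 ⟨U, hUo, hzU, fun v hv => hU v hv.1 hv.2⟩
      exact (tendsto_pure_nhds f w).mono_left h2
    · exact (hf w h).continuousWithinAt
  let g : ℂ → ℂ := fun w => (w - z)⁻¹
  let e : ℂ → ℂ := fun w => if w = z then 1 else 0
  have hg : ContinuousOn g (spectrum ℂ T) := key g fun w hw => by
    exact ContinuousAt.inv₀ (by fun_prop) (sub_ne_zero.2 hw)
  have he : ContinuousOn e (spectrum ℂ T) := key e fun w hw => by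
    have : e =ᶠ[nhds w] fun _ => 0 := by
      filter_upwards [isOpen_ne.mem_nhds hw] with v hv
      exact if_neg hv
    exact (continuousAt_const).congr this.symm
  have hl : ContinuousOn (fun w : ℂ => w - z) (spectrum ℂ T) := by fun_prop
  have hTz : cfc (fun w : ℂ => w - z) T = T - z • 1 := by
    rw [cfc_sub (fun w : ℂ => w) (fun _ => z) T, cfc_id' ℂ T, cfc_const z T,
      Algebra.algebraMap_eq_smul_one]
  refine ⟨cfc g T, cfc e T, ?_, ?_⟩
  · rw [← hTz, ← cfc_mul g _ T hg hl, ← cfc_one ℂ T, ← cfc_sub _ _ T (by fun_prop) he]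
    congr 1
    funext w
    by_cases h : w = z
    · simp [g, e, h]
    · simp [g, e, h, sub_ne_zero.2 h]
  · rw [← hTz, ← cfc_mul _ _ T hl he]
    have : (fun w => (w - z) * e w) = fun _ => (0 : ℂ) := by
      funext w
      by_cases h : w = z <;> simp [e, h]
    rw [this, cfc_const_zero]

lemma aux_weyl {H : Type*} [NormedAddCommGroup H] [InnerProductSpace ℂ H] [CompleteSpace H]
    (T : H →L[ℂ] H) (hT : IsSelfAdjoint T) (z : ℂ)
    (hV : ∀ ε : ℝ, 0 < ε → ∃ V : Submodule ℂ H, ¬ V.FG ∧ ∀ v ∈ V, ‖T v - z • v‖ ≤ ε * ‖v‖) :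
    z ∈ essentialSpectrum T := by
  have main : ∀ S P : H →L[ℂ] H, S * (T - z • 1) = 1 - P → (T - z • 1) * P = 0 →
      FiniteDimensional ℂ ↥(LinearMap.ker (T - z • (1 : H →L[ℂ] H)).toLinearMap) → False := by
    intro S P h1 h2 hfd
    set K := LinearMap.ker (T - z • (1 : H →L[ℂ] H)).toLinearMap with hK
    obtain ⟨V, hVfg, hV⟩ := hV (1 / (‖S‖ + 1)) (by positivity)
    let L : H →ₗ[ℂ] K := (K.orthogonalProjectionOnto : H →L[ℂ] K).toLinearMap
    have hex : ∃ v ∈ V ⊓ LinearMap.ker L, v ≠ 0 := by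
      by_contra hcon
      push Not at hcon
      have : V ⊓ LinearMap.ker L = ⊥ := (Submodule.eq_bot_iff _).2 hcon
      apply hVfg
      refine Submodule.fg_of_fg_map_of_fg_inf_ker L ?_ ?_
      · exact IsNoetherian.noetherian _
      · rw [this]; exact Submodule.fg_bot
    obtain ⟨v, ⟨hvV, hvL⟩, hv0⟩ := hex
    have hvperp : v ∈ Kᗮ := by
      have : K.orthogonalProjectionOnto v = 0 := hvL
      exact Submodule.orthogonalProjectionOnto_eq_zero_iff.1 this
    have hPv : P v ∈ K := by
      rw [hK, LinearMap.mem_ker]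
      exact congrArg (fun A : H →L[ℂ] H => A v) h2
    have hin : ⟪P v, v⟫_ℂ = 0 := hvperp _ hPv
    have hS : S (T v - z • v) = v - P v := by
      simpa using congrArg (fun A : H →L[ℂ] H => A v) h1
    have hn : ‖v‖ ^ 2 ≤ ‖S (T v - z • v)‖ * ‖v‖ := by
      have h3 : ⟪S (T v - z • v), v⟫_ℂ = ⟪v, v⟫_ℂ := by
        rw [hS, inner_sub_left, hin, sub_zero]
      have h4 := norm_inner_le_norm (𝕜 := ℂ) (S (T v - z • v)) v
      rw [h3, inner_self_eq_norm_sq_to_K] at h4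
      simpa using h4
    have hvpos : 0 < ‖v‖ := norm_pos_iff.2 hv0
    have h5 : ‖v‖ ≤ ‖S (T v - z • v)‖ := by
      nlinarith
    have h6 : ‖S (T v - z • v)‖ ≤ ‖S‖ * (1 / (‖S‖ + 1) * ‖v‖) :=
      (S.le_opNorm _).trans (by gcongr; exact hV v hvV)
    have h7 : ‖S‖ * (1 / (‖S‖ + 1) * ‖v‖) < ‖v‖ := by
      have : ‖S‖ * (1 / (‖S‖ + 1) * ‖v‖) = (‖S‖ / (‖S‖ + 1)) * ‖v‖ := by ring
      rw [this]
      have h8 : ‖S‖ / (‖S‖ + 1) < 1 := by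
        rw [div_lt_one (by positivity)]; linarith
      nlinarith
    linarith
  refine ⟨?_, ?_⟩
  · intro hres
    have hu : IsUnit (T - z • (1 : H →L[ℂ] H)) := by
      have h1 : IsUnit (algebraMap ℂ (H →L[ℂ] H) z - T) := hres
      rw [Algebra.algebraMap_eq_smul_one] at h1
      simpa using h1.neg
    obtain ⟨u, hu⟩ := hu
    refine main (↑u⁻¹) 0 ?_ (by simp) ?_
    · rw [← hu]; simp
    · have : LinearMap.ker (T - z • (1 : H →L[ℂ] H)).toLinearMap = ⊥ := by
        rw [LinearMap.ker_eq_bot]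
        exact (ContinuousLinearMap.isUnit_iff_bijective.1 ⟨u, hu⟩).1
      rw [this]; infer_instance
  · rintro ⟨-, hiso, -, hfd⟩
    obtain ⟨S, P, h1, h2⟩ := aux_isolated T hT z hiso
    exact main S P h1 h2 hfd

variable {H K1 K2 : Type*} [NormedAddCommGroup H] [InnerProductSpace ℂ H] [CompleteSpace H]
  [NormedAddCommGroup K1] [InnerProductSpace ℂ K1]
  [NormedAddCommGroup K2] [InnerProductSpace ℂ K2] [CompleteSpace K2]

lemma aux_spec {n : ℕ} (J : Fin n → K2 →L[ℂ] H)
    (hJ : ∀ k l g g', ⟪J k g, J l g'⟫_ℂ = if k = l then ⟪g, g'⟫_ℂ else 0)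
    (M : Fin n → K2 →L[ℂ] K2) (T : H →L[ℂ] H)
    (hTJ : ∀ k g, T (J k g) = J k (M k g))
    (hT0 : ∀ f, (∀ k g, ⟪J k g, f⟫_ℂ = 0) → T f = 0)
    (z : ℂ) (hz : z ∈ spectrum ℂ T) (hz0 : z ≠ 0) : ∃ k, z ∈ spectrum ℂ (M k) := by
  by_contra hcon
  push Not at hcon
  have hbij : ∀ k, Function.Bijective (M k - z • (1 : K2 →L[ℂ] K2)) := by
    intro k
    have h1 : IsUnit (algebraMap ℂ (K2 →L[ℂ] K2) z - M k) := by
      have := hcon k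
      rwa [spectrum.notMem_iff] at this
    rw [Algebra.algebraMap_eq_smul_one] at h1
    rw [← ContinuousLinearMap.isUnit_iff_bijective]
    simpa using h1.neg
  have hJJ : ∀ k l g, (J k).adjoint (J l g) = if k = l then g else 0 := by
    intro k l g
    refine ext_inner_left ℂ fun v => ?_
    rw [ContinuousLinearMap.adjoint_inner_right, hJ]
    split_ifs <;> simp
  have hdec : ∀ f, T f = ∑ k, J k (M k ((J k).adjoint f)) := by
    intro f
    have h0 : T (f - ∑ k, J k ((J k).adjoint f)) = 0 := by
      apply hT0
      intro k g
      rw [← ContinuousLinearMap.adjoint_inner_right, map_sub, map_sum]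
      simp [hJJ]
    rw [map_sub, sub_eq_zero] at h0
    rw [h0, map_sum]
    simp [hTJ]
  have hu : IsUnit (T - z • (1 : H →L[ℂ] H)) := by
    rw [ContinuousLinearMap.isUnit_iff_bijective]
    constructor
    · rw [injective_iff_map_eq_zero]
      intro f hf
      have hf1 : T f = z • f := by
        simpa [sub_eq_zero] using hf
      have hk : ∀ k, (J k).adjoint f = 0 := by
        intro k
        have h1 : (J k).adjoint (T f) = M k ((J k).adjoint f) := by
          rw [hdec, map_sum]; simp [hJJ]
        rw [hf1, map_smul] at h1
        apply (hbij k).1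
        simp [h1]
      have : z • f = 0 := by rw [← hf1, hdec]; simp [hk]
      exact (smul_eq_zero.1 this).resolve_left hz0
    · intro r
      choose g hg using fun k => (hbij k).2 ((J k).adjoint r)
      refine ⟨∑ k, J k (g k) - z⁻¹ • (r - ∑ k, J k ((J k).adjoint r)), ?_⟩
      have h0 : T (r - ∑ k, J k ((J k).adjoint r)) = 0 := by
        apply hT0
        intro k g
        rw [← ContinuousLinearMap.adjoint_inner_right, map_sub, map_sum]
        simp [hJJ]
      have h1 : ∑ k, J k ((J k).adjoint r) = ∑ k, J k (M k (g k)) - z • ∑ k, J k (g k) := by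
        rw [Finset.smul_sum, ← Finset.sum_sub_distrib]
        refine Finset.sum_congr rfl fun k _ => ?_
        rw [← hg k]; simp
      simp only [sub_apply, smul_apply,
        one_apply_eq_self]
      rw [map_sub, map_smul, h0, map_sum]
      simp only [hTJ]
      rw [smul_sub, smul_zero, sub_zero, smul_smul, mul_inv_cancel₀ hz0, one_smul, h1]
      abel
  apply hz
  show IsUnit (algebraMap ℂ (H →L[ℂ] H) z - T)
  rw [Algebra.algebraMap_eq_smul_one]
  simpa using hu.neg

lemma aux_half {n m : ℕ} (τ : K1 →L[ℂ] K2 →L[ℂ] H)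
    (hτ : ∀ u g u' g', ⟪τ u g, τ u' g'⟫_ℂ = ⟪u, u'⟫_ℂ * ⟪g, g'⟫_ℂ)
    (φ : Fin n → K1) (hφ : ∀ i j, ⟪φ i, φ j⟫_ℂ = if i = j then 1 else 0)
    (ψ : Fin m → K2)
    (M : Fin n → K2 →L[ℂ] K2) (T1 T2 : H →L[ℂ] H) (hsa : IsSelfAdjoint (T1 + T2))
    (h1 : ∀ u g, T1 (τ u g) = ∑ k, ⟪φ k, u⟫_ℂ • τ (φ k) (M k g))
    (h2 : ∀ u g, (∀ j, ⟪ψ j, g⟫_ℂ = 0) → T2 (τ u g) = 0)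
    (h3 : ∀ f, (∀ k g, ⟪τ (φ k) g, f⟫_ℂ = 0) → T1 f = 0)
    (hK1 : ¬ (⊤ : Submodule ℂ K1).FG) (hK2 : ¬ (⊤ : Submodule ℂ K2).FG)
    (hM : ∀ k, ∀ z ∈ spectrum ℂ (M k), ∀ ε : ℝ, 0 < ε → ∃ V : Submodule ℂ K2, ¬ V.FG ∧
      ∀ v ∈ V, ‖M k v - z • v‖ ≤ ε * ‖v‖) :
    spectrum ℂ T1 ⊆ essentialSpectrum (T1 + T2) := by
  intro z hz
  have hnorm : ∀ u g, ‖τ u g‖ = ‖u‖ * ‖g‖ := by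
    intro u g
    have := hτ u g u g
    rw [inner_self_eq_norm_sq_to_K, inner_self_eq_norm_sq_to_K, inner_self_eq_norm_sq_to_K] at this
    have h' : ‖τ u g‖ ^ 2 = (‖u‖ * ‖g‖) ^ 2 := by
      rw [mul_pow]; exact_mod_cast this
    exact (pow_left_inj₀ (norm_nonneg _) (by positivity) two_ne_zero).1 h'
  have red : ∀ (u : K1) (ε : ℝ), u ≠ 0 → ∀ W : Submodule ℂ K2, ¬ W.FG →
      (∀ g ∈ W, ‖T1 (τ u g) - z • τ u g‖ ≤ ε * ‖τ u g‖) →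
      ∃ V : Submodule ℂ H, ¬ V.FG ∧ ∀ v ∈ V, ‖(T1 + T2) v - z • v‖ ≤ ε * ‖v‖ := by
    intro u ε hu W hW hWb
    let L : K2 →ₗ[ℂ] (Fin m → ℂ) := LinearMap.pi fun j => (innerSL ℂ (ψ j)).toLinearMap
    have hW' : ¬ (W ⊓ LinearMap.ker L).FG := fun hfg =>
      hW (Submodule.fg_of_fg_map_of_fg_inf_ker L (IsNoetherian.noetherian _) hfg)
    refine ⟨(W ⊓ LinearMap.ker L).map (τ u).toLinearMap, fun hfg => hW' ?_, ?_⟩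
    · refine Submodule.fg_of_fg_map_injective (τ u).toLinearMap ?_ hfg
      rw [injective_iff_map_eq_zero]
      intro g hg
      have h4 := hnorm u g
      have h5 : τ u g = 0 := hg
      rw [h5, norm_zero] at h4
      have := mul_eq_zero.1 h4.symm
      simpa [hu] using this
    · rintro _ ⟨g, ⟨hgW, hgL⟩, rfl⟩
      have h4 : T2 (τ u g) = 0 := by
        apply h2
        intro j
        exact congrFun (LinearMap.mem_ker.1 hgL) j
      have := hWb g hgW
      simpa [h4] using this
  apply aux_weyl _ hsa
  intro ε hε
  by_cases hz0 : z = 0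
  · subst hz0
    let L : K1 →ₗ[ℂ] (Fin n → ℂ) := LinearMap.pi fun j => (innerSL ℂ (φ j)).toLinearMap
    have hex : ∃ u ∈ LinearMap.ker L, u ≠ 0 := by
      by_contra hc
      push Not at hc
      have : (⊤ : Submodule ℂ K1) ⊓ LinearMap.ker L = ⊥ := by
        rw [top_inf_eq]; exact (Submodule.eq_bot_iff _).2 hc
      apply hK1
      refine Submodule.fg_of_fg_map_of_fg_inf_ker L (IsNoetherian.noetherian _) ?_
      rw [this]; exact Submodule.fg_bot
    obtain ⟨u, hu, hu0⟩ := hex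
    have hu' : ∀ k, ⟪φ k, u⟫_ℂ = 0 := fun k => congrFun (LinearMap.mem_ker.1 hu) k
    refine red u ε hu0 ⊤ hK2 fun g _ => ?_
    rw [h1]
    simp only [hu', zero_smul, Finset.sum_const_zero, sub_zero, norm_zero]
    positivity
  · have hJT : ∀ k g, T1 (τ (φ k) g) = τ (φ k) (M k g) := by
      intro k g
      rw [h1]
      simp [hφ]
    obtain ⟨k, hk⟩ := aux_spec (fun k => τ (φ k)) (by
      intro k l g g'
      simp only [hτ, hφ]
      split_ifs <;> simp) M T1 hJT h3 z hz hz0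
    obtain ⟨V, hV, hVb⟩ := hM k z hk ε hε
    have hφ0 : φ k ≠ 0 := by
      intro h0
      have := hφ k k
      simp [h0] at this
    refine red (φ k) ε hφ0 V hV fun g hg => ?_
    rw [hJT, ← map_smul, ← map_sub, hnorm, hnorm]
    have := hVb g hg
    have h0 := norm_nonneg (φ k)
    nlinarith
end AbstractPart
section MeasurePart
open scoped InnerProductSpace ENNReal

lemma aux_mul (μ : Measure ℝ) (h : ℝ → ℂ) (hm : Measurable h) (C : ℝ)
    (hb : ∀ᵐ y ∂μ, ‖h y‖ ≤ C) :
    ∃ M : Lp ℂ 2 μ →L[ℂ] Lp ℂ 2 μ, ∀ g : Lp ℂ 2 μ, M g =ᵐ[μ] fun y => h y * g y := by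
  have hL : MemLp h ∞ μ := memLp_top_of_bound hm.aestronglyMeasurable C hb
  refine ⟨(ContinuousLinearMap.mul ℂ ℂ).holderL μ ∞ 2 2 (hL.toLp h), fun g => ?_⟩
  filter_upwards [(ContinuousLinearMap.mul ℂ ℂ).coeFn_holder (r := 2) (hL.toLp h) g,
    hL.coeFn_toLp] with y h1 h2
  rw [ContinuousLinearMap.holderL_apply_apply, h1, h2]
  rfl

lemma aux_infdim (μ : Measure ℝ) [IsFiniteMeasure μ] [NullSingletonClass μ] (S : Set ℝ)
    (hS : MeasurableSet S) (hS0 : μ S ≠ 0) :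
    ∃ V : Submodule ℂ (Lp ℂ 2 μ), ¬ V.FG ∧ ∀ g ∈ V, ∀ᵐ y ∂μ, y ∉ S → g y = 0 := by
  obtain ⟨A, hA⟩ := aux_mul μ (fun y => (Real.arctan y : ℂ)) (by fun_prop) (Real.pi / 2)
    (Filter.Eventually.of_forall fun y => by
      rw [Complex.norm_real, Real.norm_eq_abs, abs_le]
      exact ⟨(by linarith [Real.neg_pi_div_two_lt_arctan y]), (Real.arctan_lt_pi_div_two y).le⟩)
  let V : Submodule ℂ (Lp ℂ 2 μ) :=
    { carrier := {g | ∀ᵐ y ∂μ, y ∉ S → g y = 0}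
      add_mem' := by
        intro f g hf hg
        filter_upwards [hf, hg, Lp.coeFn_add f g] with y h1 h2 h3 hy
        rw [h3]; simp [h1 hy, h2 hy]
      zero_mem' := by
        filter_upwards [Lp.coeFn_zero ℂ 2 μ] with y h1 hy
        rw [h1]; rfl
      smul_mem' := by
        intro c f hf
        filter_upwards [hf, Lp.coeFn_smul c f] with y h1 h3 hy
        rw [h3]; simp [h1 hy] }
  refine ⟨V, fun hfg => ?_, fun g hg => hg⟩
  have hAV : ∀ g ∈ V, A.toLinearMap g ∈ V := by
    intro g hg
    have hg' : ∀ᵐ y ∂μ, y ∉ S → g y = 0 := hg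
    show ∀ᵐ y ∂μ, y ∉ S → A g y = 0
    filter_upwards [hg', hA g] with y h1 h2 hy
    rw [h2, h1 hy, mul_zero]
  have hfd : FiniteDimensional ℂ V := by
    rwa [← Submodule.fg_iff_finiteDimensional]
  have hnt : Nontrivial V := by
    have hi : MemLp (S.indicator fun _ => (1 : ℂ)) 2 μ :=
      memLp_indicator_const 2 hS 1 (Or.inr (measure_ne_top _ _))
    refine ⟨⟨⟨hi.toLp _, ?_⟩, 0, ?_⟩⟩
    · show ∀ᵐ y ∂μ, y ∉ S → hi.toLp _ y = 0
      filter_upwards [hi.coeFn_toLp] with y h1 hy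
      rw [h1]; simp [hy]
    · intro h0
      have h0' : hi.toLp _ = 0 := congrArg Subtype.val h0
      apply hS0
      have h1 : ∀ᵐ y ∂μ, y ∉ S := by
        have h2 := hi.coeFn_toLp
        rw [h0'] at h2
        filter_upwards [h2, Lp.coeFn_zero ℂ 2 μ] with y h3 h4 hy
        rw [h4] at h3
        simp [hy] at h3
      rw [ae_iff] at h1
      simpa using h1
  obtain ⟨c, hc⟩ := Module.End.exists_eigenvalue (A.toLinearMap.restrict hAV)
  obtain ⟨v, hv⟩ := hc.exists_hasEigenvector
  apply hv.2
  have h1 : A v.1 = c • v.1 := congrArg Subtype.val hv.apply_eq_smul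
  have h2 : ∀ᵐ y ∂μ, (v.1 : ℝ → ℂ) y = 0 := by
    have hnull : ∀ᵐ y ∂μ, ¬ ((Real.arctan y : ℂ) = c) := by
      rw [ae_iff]
      refine Set.Subsingleton.measure_zero ?_ μ
      intro y hy y' hy'
      simp only [not_not, Set.mem_ofPred_eq] at hy hy'
      apply Real.arctan_injective
      rw [← hy'] at hy
      exact_mod_cast hy
    have h3 := hA v.1
    rw [h1] at h3
    filter_upwards [h3, Lp.coeFn_smul c v.1, hnull] with y h4 h5 h6
    rw [h5] at h4
    simp only [Pi.smul_apply, smul_eq_mul] at h4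
    by_contra h7
    exact h6 (mul_right_cancel₀ h7 h4).symm
  apply Subtype.ext
  exact Lp.ext (by
    filter_upwards [h2, Lp.coeFn_zero ℂ 2 μ] with y h3 h4
    rw [h3]; exact h4.symm)

lemma aux_top (μ : Measure ℝ) [IsFiniteMeasure μ] [NullSingletonClass μ] (h0 : μ Set.univ ≠ 0) :
    ¬ (⊤ : Submodule ℂ (Lp ℂ 2 μ)).FG := by
  obtain ⟨V, hV, -⟩ := aux_infdim μ Set.univ MeasurableSet.univ h0
  intro h
  apply hV
  have : FiniteDimensional ℂ (Lp ℂ 2 μ) := ⟨h⟩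
  exact IsNoetherian.noetherian V

lemma aux_ess (μ : Measure ℝ) [IsFiniteMeasure μ] [NullSingletonClass μ] (h : ℝ → ℂ) (hm : Measurable h)
    (M : Lp ℂ 2 μ →L[ℂ] Lp ℂ 2 μ) (hM : ∀ g : Lp ℂ 2 μ, M g =ᵐ[μ] fun y => h y * g y)
    (z : ℂ) (hz : z ∈ spectrum ℂ M) (ε : ℝ) (hε : 0 < ε) :
    ∃ V : Submodule ℂ (Lp ℂ 2 μ), ¬ V.FG ∧ ∀ v ∈ V, ‖M v - z • v‖ ≤ ε * ‖v‖ := by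
  have hS : MeasurableSet {y | ‖h y - z‖ < ε} :=
    measurableSet_lt (by fun_prop) (by fun_prop)
  have hsub : ∀ g : Lp ℂ 2 μ, (M g - z • g : Lp ℂ 2 μ) =ᵐ[μ] fun y => (h y - z) * g y := by
    intro g
    filter_upwards [hM g, Lp.coeFn_sub (M g) (z • g), Lp.coeFn_smul z g] with y h1 h2 h3
    rw [h2, Pi.sub_apply, h1, h3]
    simp; ring
  by_cases hS0 : μ {y | ‖h y - z‖ < ε} = 0
  · exfalso
    have hae : ∀ᵐ y ∂μ, ε ≤ ‖h y - z‖ := by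
      rw [ae_iff]; simpa using hS0
    obtain ⟨R, hR⟩ := aux_mul μ (fun y => (h y - z)⁻¹) (by fun_prop) ε⁻¹ (by
      filter_upwards [hae] with y hy
      rw [norm_inv]
      exact inv_anti₀ hε hy)
    have e1 : (M - z • 1) * R = 1 := by
      ext1 g
      apply Lp.ext
      filter_upwards [hsub (R g), hR g, hae] with y h1 h2 h3
      have h4 : h y - z ≠ 0 := norm_pos_iff.1 (hε.trans_le h3)
      have : ((M - z • (1 : Lp ℂ 2 μ →L[ℂ] Lp ℂ 2 μ)) * R) g = M (R g) - z • R g := by simp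
      rw [this, h1, h2, ← mul_assoc, mul_inv_cancel₀ h4, one_mul]
      rfl
    have e2 : R * (M - z • 1) = 1 := by
      ext1 g
      apply Lp.ext
      filter_upwards [hsub g, hR (M g - z • g), hae] with y h1 h2 h3
      have h4 : h y - z ≠ 0 := norm_pos_iff.1 (hε.trans_le h3)
      have : (R * (M - z • (1 : Lp ℂ 2 μ →L[ℂ] Lp ℂ 2 μ))) g = R (M g - z • g) := by simp
      rw [this, h2, h1, ← mul_assoc, inv_mul_cancel₀ h4, one_mul]
      rfl
    apply hz
    show IsUnit (algebraMap ℂ (Lp ℂ 2 μ →L[ℂ] Lp ℂ 2 μ) z - M)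
    have hu : IsUnit (M - z • (1 : Lp ℂ 2 μ →L[ℂ] Lp ℂ 2 μ)) := ⟨⟨_, R, e1, e2⟩, rfl⟩
    rw [Algebra.algebraMap_eq_smul_one]
    simpa using hu.neg
  · obtain ⟨V, hV, hVS⟩ := aux_infdim μ _ hS hS0
    refine ⟨V, hV, fun v hv => ?_⟩
    apply Lp.norm_le_mul_norm_of_ae_le_mul
    filter_upwards [hsub v, hVS v hv] with y h1 h2
    rw [h1, norm_mul]
    by_cases hy : ‖h y - z‖ < ε
    · gcongr
    · rw [h2 hy]; simp

lemma aux_memLp (μ ν : Measure ℝ) [IsFiniteMeasure μ] [IsFiniteMeasure ν] {u g : ℝ → ℂ}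
    (hu : MemLp u 2 μ) (hg : MemLp g 2 ν) :
    MemLp (fun z : ℝ × ℝ => u z.1 * g z.2) 2 (μ.prod ν) := by
  have hm : AEStronglyMeasurable (fun z : ℝ × ℝ => u z.1 * g z.2) (μ.prod ν) :=
    hu.1.comp_fst.mul hg.1.comp_snd
  rw [memLp_two_iff_integrable_sq_norm hm]
  have := ((memLp_two_iff_integrable_sq_norm hu.1).1 hu).mul_prod
    ((memLp_two_iff_integrable_sq_norm hg.1).1 hg)
  simpa [mul_pow] using this

lemma aux_fst (μ ν : Measure ℝ) [SFinite μ] [SFinite ν] {p : ℝ → Prop} (h : ∀ᵐ x ∂μ, p x) :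
    ∀ᵐ z ∂(μ.prod ν), p z.1 := Measure.quasiMeasurePreserving_fst.ae h

lemma aux_snd (μ ν : Measure ℝ) [SFinite μ] [SFinite ν] {p : ℝ → Prop} (h : ∀ᵐ x ∂ν, p x) :
    ∀ᵐ z ∂(μ.prod ν), p z.2 := Measure.quasiMeasurePreserving_snd.ae h

lemma aux_inner_of_ae (μ ν : Measure ℝ) [IsFiniteMeasure μ] [IsFiniteMeasure ν]
    (u u' : Lp ℂ 2 μ) (g g' : Lp ℂ 2 ν) (F F' : Lp ℂ 2 (μ.prod ν))
    (hF : F =ᵐ[μ.prod ν] fun z => u z.1 * g z.2)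
    (hF' : F' =ᵐ[μ.prod ν] fun z => u' z.1 * g' z.2) :
    ⟪F, F'⟫_ℂ = ⟪u, u'⟫_ℂ * ⟪g, g'⟫_ℂ := by
  rw [L2.inner_def, L2.inner_def, L2.inner_def, ← integral_prod_mul]
  apply integral_congr_ae
  filter_upwards [hF, hF'] with z h1 h2
  rw [h1, h2]
  simp only [RCLike.inner_apply, map_mul]
  ring

lemma aux_tau (μ ν : Measure ℝ) [IsFiniteMeasure μ] [IsFiniteMeasure ν] :
    ∃ τ : Lp ℂ 2 μ →L[ℂ] Lp ℂ 2 ν →L[ℂ] Lp ℂ 2 (μ.prod ν),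
      ∀ u g, τ u g =ᵐ[μ.prod ν] fun z => u z.1 * g z.2 := by
  let t : Lp ℂ 2 μ → Lp ℂ 2 ν → Lp ℂ 2 (μ.prod ν) := fun u g =>
    (aux_memLp μ ν (Lp.memLp u) (Lp.memLp g)).toLp _
  have ht : ∀ u g, t u g =ᵐ[μ.prod ν] fun z => u z.1 * g z.2 := fun u g =>
    (aux_memLp μ ν (Lp.memLp u) (Lp.memLp g)).coeFn_toLp
  let L : Lp ℂ 2 μ →ₗ[ℂ] Lp ℂ 2 ν →ₗ[ℂ] Lp ℂ 2 (μ.prod ν) := LinearMap.mk₂ ℂ t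
    (by
      intro u u' g
      apply Lp.ext
      filter_upwards [ht (u + u') g, ht u g, ht u' g, Lp.coeFn_add (t u g) (t u' g),
        aux_fst μ ν (Lp.coeFn_add u u')] with z h1 h2 h3 h4 h5
      rw [h1, h4, h5, Pi.add_apply, Pi.add_apply, h2, h3]; ring)
    (by
      intro c u g
      apply Lp.ext
      filter_upwards [ht (c • u) g, ht u g, Lp.coeFn_smul c (t u g),
        aux_fst μ ν (Lp.coeFn_smul c u)] with z h1 h2 h4 h5
      rw [h1, h4, h5, Pi.smul_apply, Pi.smul_apply, h2, smul_eq_mul, smul_eq_mul]; ring)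
    (by
      intro u g g'
      apply Lp.ext
      filter_upwards [ht u (g + g'), ht u g, ht u g', Lp.coeFn_add (t u g) (t u g'),
        aux_snd μ ν (Lp.coeFn_add g g')] with z h1 h2 h3 h4 h5
      rw [h1, h4, h5, Pi.add_apply, Pi.add_apply, h2, h3]; ring)
    (by
      intro c u g
      apply Lp.ext
      filter_upwards [ht u (c • g), ht u g, Lp.coeFn_smul c (t u g),
        aux_snd μ ν (Lp.coeFn_smul c g)] with z h1 h2 h4 h5
      rw [h1, h4, h5, Pi.smul_apply, Pi.smul_apply, h2, smul_eq_mul, smul_eq_mul]; ring)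
  refine ⟨L.mkContinuous₂ 1 ?_, fun u g => ht u g⟩
  intro u g
  have h1 := aux_inner_of_ae μ ν u u g g (t u g) (t u g) (ht u g) (ht u g)
  rw [inner_self_eq_norm_sq_to_K, inner_self_eq_norm_sq_to_K, inner_self_eq_norm_sq_to_K] at h1
  have h' : ‖t u g‖ ^ 2 = (‖u‖ * ‖g‖) ^ 2 := by
    rw [mul_pow]; exact_mod_cast h1
  have := (pow_left_inj₀ (norm_nonneg _) (by positivity) two_ne_zero).1 h'
  rw [one_mul]
  exact this.le

end MeasurePart
section OperatorPart
open scoped InnerProductSpace ENNReal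

lemma aux_int_split {n : ℕ} (μ : Measure ℝ) (φ : Fin n → ℝ → ℂ) (f : ℝ → ℂ) (γ : Fin n → ℂ)
    (hi : ∀ k, Integrable (fun s => star (φ k s) * f s) μ) :
    ∫ s, (∑ k, γ k * star (φ k s)) * f s ∂μ = ∑ k, γ k * ∫ s, star (φ k s) * f s ∂μ := by
  simp_rw [Finset.sum_mul, mul_assoc]
  rw [integral_finsetSum _ (fun k _ => (hi k).const_mul (γ k))]
  simp_rw [integral_const_mul]

lemma aux_int_tau {n : ℕ} (μ : Measure ℝ) (φ : Fin n → ℝ → ℂ) (hφ : ∀ k, MemLp (φ k) 2 μ)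
    (u : Lp ℂ 2 μ) (f : ℝ → ℂ) (c : ℂ) (hf : f =ᵐ[μ] fun s => u s * c) (γ : Fin n → ℂ) :
    ∫ s, (∑ k, γ k * star (φ k s)) * f s ∂μ = ∑ k, γ k * (⟪(hφ k).toLp _, u⟫_ℂ * c) := by
  have h0 : ∀ k, (fun s => star (φ k s) * f s) =ᵐ[μ] fun s => ⟪(hφ k).toLp _ s, u s⟫_ℂ * c := by
    intro k
    filter_upwards [hf, (hφ k).coeFn_toLp] with s h1 h2
    rw [h1, h2]
    simp only [RCLike.inner_apply, RCLike.star_def]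
    ring
  rw [aux_int_split]
  · refine Finset.sum_congr rfl fun k _ => ?_
    rw [integral_congr_ae (h0 k), L2.inner_def, integral_mul_const]
  · intro k
    rw [integrable_congr (h0 k)]
    exact (L2.integrable_inner _ _).mul_const c

lemma aux_slice (μ ν : Measure ℝ) [IsFiniteMeasure μ] [IsFiniteMeasure ν] (φ : ℝ → ℂ)
    (hφ : MemLp φ 2 μ) (f : ℝ × ℝ → ℂ) (hf : MemLp f 2 (μ.prod ν))
    (h0 : ∀ A, MeasurableSet A →
      ∫ z, star (φ z.1) * (A.indicator (fun _ => (1 : ℂ)) z.2) * f z ∂(μ.prod ν) = 0) :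
    ∀ᵐ y ∂ν, Integrable (fun s => star (φ s) * f (s, y)) μ ∧
      ∫ s, star (φ s) * f (s, y) ∂μ = 0 := by
  have hφ' : MemLp (fun z : ℝ × ℝ => star (φ z.1)) 2 (μ.prod ν) := by
    have := aux_memLp μ ν hφ.star (memLp_const (1 : ℂ))
    simpa using this
  have hI : Integrable (fun z : ℝ × ℝ => star (φ z.1) * f z) (μ.prod ν) :=
    hφ'.integrable_mul hf
  have h1 : (fun y => ∫ s, star (φ s) * f (s, y) ∂μ) =ᵐ[ν] 0 := by
    apply hI.integral_prod_right.ae_eq_zero_of_forall_setIntegral_eq_zero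
    intro A hA _
    have h2 := h0 A hA
    have hI2 : Integrable (fun z : ℝ × ℝ =>
        star (φ z.1) * (A.indicator (fun _ => (1 : ℂ)) z.2) * f z) (μ.prod ν) := by
      have := hI.indicator (measurable_snd hA)
      refine this.congr (Filter.Eventually.of_forall fun z => ?_)
      by_cases hz : z.2 ∈ A <;> simp [Set.indicator, hz]
    rw [integral_prod_symm _ hI2] at h2
    rw [← h2, ← integral_indicator hA]
    congr 1
    funext y
    by_cases hy : y ∈ A <;> simp [Set.indicator, hy]
  filter_upwards [hI.prod_left_ae, h1] with y h2 h3
  exact ⟨h2, h3⟩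

variable (μ ν : Measure ℝ) [IsFiniteMeasure μ] [IsFiniteMeasure ν]
    (τ : Lp ℂ 2 μ →L[ℂ] Lp ℂ 2 ν →L[ℂ] Lp ℂ 2 (μ.prod ν))

lemma aux_ae_left {p : ℝ × ℝ → Prop} (h : ∀ᵐ z ∂(μ.prod ν), p z) :
    ∀ᵐ y ∂ν, ∀ᵐ x ∂μ, p (x, y) := by
  have h' : ∀ᵐ z ∂(ν.prod μ), p z.swap :=
    (Measure.measurePreserving_swap (μ := ν) (ν := μ)).quasiMeasurePreserving.ae h
  exact Measure.ae_ae_of_ae_prod h'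

lemma aux_sum_ae {n : ℕ} {α : Type*} [MeasurableSpace α] (ρ : Measure α) (F : Fin n → Lp ℂ 2 ρ) :
    (∑ k, F k : Lp ℂ 2 ρ) =ᵐ[ρ] fun z => ∑ k, F k z := by
  have : ∀ s : Finset (Fin n), (∑ k ∈ s, F k : Lp ℂ 2 ρ) =ᵐ[ρ] fun z => ∑ k ∈ s, F k z := by
    classical
    intro s
    induction s using Finset.induction_on with
    | empty =>
      filter_upwards [Lp.coeFn_zero ℂ 2 ρ] with z hz
      simpa using hz
    | insert a s ha ih =>
      rw [Finset.sum_insert ha]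
      filter_upwards [ih, Lp.coeFn_add (F a) (∑ k ∈ s, F k)] with z h1 h2
      rw [h2, Pi.add_apply, h1, Finset.sum_insert ha]
  exact this Finset.univ

lemma aux_T1_tau
    (hτ : ∀ u g, τ u g =ᵐ[μ.prod ν] fun z => u z.1 * g z.2)
    {n : ℕ} (φ : Fin n → ℝ → ℂ) (hφ : ∀ k, MemLp (φ k) 2 μ) (h : Fin n → ℝ → ℝ)
    (M : Fin n → Lp ℂ 2 ν →L[ℂ] Lp ℂ 2 ν)
    (hM : ∀ k, ∀ g : Lp ℂ 2 ν, M k g =ᵐ[ν] fun y => (h k y : ℂ) * g y)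
    (T1 : Lp ℂ 2 (μ.prod ν) →L[ℂ] Lp ℂ 2 (μ.prod ν))
    (hT1 : ∀ f : Lp ℂ 2 (μ.prod ν), ∀ᵐ z ∂(μ.prod ν),
        T1 f z = ∫ s, (∑ k, φ k z.1 * star (φ k s) * (h k z.2 : ℂ)) * f (s, z.2) ∂μ)
    (u : Lp ℂ 2 μ) (g : Lp ℂ 2 ν) :
    T1 (τ u g) = ∑ k, ⟪(hφ k).toLp _, u⟫_ℂ • τ ((hφ k).toLp _) (M k g) := by
  apply Lp.ext
  have hA := fun k => hτ ((hφ k).toLp _) (M k g)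
  have hB := fun k => Lp.coeFn_smul (⟪(hφ k).toLp _, u⟫_ℂ) (τ ((hφ k).toLp _) (M k g))
  have hC := fun k => aux_snd μ ν (hM k g)
  have hD := fun k => aux_fst μ ν (hφ k).coeFn_toLp
  filter_upwards [hT1 (τ u g), aux_snd μ ν (aux_ae_left μ ν (hτ u g)), ae_all_iff.2 hA,
    ae_all_iff.2 hB, ae_all_iff.2 hC, ae_all_iff.2 hD, aux_sum_ae (μ.prod ν) fun k =>
    ⟪(hφ k).toLp _, u⟫_ℂ • τ ((hφ k).toLp _) (M k g)] with z h1 h2 h3 h4 h5 h6 h7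
  rw [h1, h7]
  have := aux_int_tau μ φ hφ u (fun s => τ u g (s, z.2)) (g z.2) h2
    (fun k => φ k z.1 * (h k z.2 : ℂ))
  simp_rw [mul_right_comm (φ _ z.1) (star _)]
  rw [this]
  refine Finset.sum_congr rfl fun k _ => ?_
  rw [h4 k, Pi.smul_apply, h3 k, h5 k, h6 k, smul_eq_mul]
  ring

lemma aux_T1_zero
    (hτ : ∀ u g, τ u g =ᵐ[μ.prod ν] fun z => u z.1 * g z.2)
    {n : ℕ} (φ : Fin n → ℝ → ℂ) (hφ : ∀ k, MemLp (φ k) 2 μ) (h : Fin n → ℝ → ℝ)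
    (T1 : Lp ℂ 2 (μ.prod ν) →L[ℂ] Lp ℂ 2 (μ.prod ν))
    (hT1 : ∀ f : Lp ℂ 2 (μ.prod ν), ∀ᵐ z ∂(μ.prod ν),
        T1 f z = ∫ s, (∑ k, φ k z.1 * star (φ k s) * (h k z.2 : ℂ)) * f (s, z.2) ∂μ)
    (f : Lp ℂ 2 (μ.prod ν)) (hf : ∀ k g, ⟪τ ((hφ k).toLp _) g, f⟫_ℂ = 0) : T1 f = 0 := by
  have hsl : ∀ k, ∀ᵐ y ∂ν, Integrable (fun s => star (φ k s) * f (s, y)) μ ∧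
      ∫ s, star (φ k s) * f (s, y) ∂μ = 0 := by
    intro k
    refine aux_slice μ ν (φ k) (hφ k) f (Lp.memLp f) fun A hA => ?_
    have hi : MemLp (A.indicator fun _ => (1 : ℂ)) 2 ν :=
      memLp_indicator_const 2 hA 1 (Or.inr (measure_ne_top _ _))
    rw [← hf k (hi.toLp _), L2.inner_def]
    apply integral_congr_ae
    filter_upwards [hτ ((hφ k).toLp _) (hi.toLp _), aux_fst μ ν (hφ k).coeFn_toLp,
      aux_snd μ ν hi.coeFn_toLp] with z h1 h2 h3
    rw [h1, h2, h3]
    by_cases hz : z.2 ∈ A <;> simp [hz, mul_comm]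
  apply Lp.ext
  filter_upwards [hT1 f, aux_snd μ ν (ae_all_iff.2 hsl), Lp.coeFn_zero ℂ 2 (μ.prod ν)]
    with z h1 h2 h3
  rw [h1, h3]
  have := aux_int_split μ φ (fun s => f (s, z.2)) (fun k => φ k z.1 * (h k z.2 : ℂ))
    (fun k => (h2 k).1)
  simp_rw [mul_right_comm (φ _ z.1) (star _)]
  rw [this]
  simp only [Pi.zero_apply]
  exact Finset.sum_eq_zero fun k _ => by rw [(h2 k).2, mul_zero]

lemma aux_T2_tau
    (hτ : ∀ u g, τ u g =ᵐ[μ.prod ν] fun z => u z.1 * g z.2)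
    {m : ℕ} (ψ : Fin m → ℝ → ℂ) (hψ : ∀ k, MemLp (ψ k) 2 ν) (p : Fin m → ℝ → ℝ)
    (N : Fin m → Lp ℂ 2 μ →L[ℂ] Lp ℂ 2 μ)
    (hN : ∀ k, ∀ g : Lp ℂ 2 μ, N k g =ᵐ[μ] fun y => (p k y : ℂ) * g y)
    (T2 : Lp ℂ 2 (μ.prod ν) →L[ℂ] Lp ℂ 2 (μ.prod ν))
    (hT2 : ∀ f : Lp ℂ 2 (μ.prod ν), ∀ᵐ z ∂(μ.prod ν),
        T2 f z = ∫ t, (∑ j, (p j z.1 : ℂ) * ψ j z.2 * star (ψ j t)) * f (z.1, t) ∂ν)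
    (g : Lp ℂ 2 ν) (u : Lp ℂ 2 μ) :
    T2 (τ u g) = ∑ k, ⟪(hψ k).toLp _, g⟫_ℂ • τ (N k u) ((hψ k).toLp _) := by
  apply Lp.ext
  have hA := fun k => hτ (N k u) ((hψ k).toLp _)
  have hB := fun k => Lp.coeFn_smul (⟪(hψ k).toLp _, g⟫_ℂ) (τ (N k u) ((hψ k).toLp _))
  have hC := fun k => aux_fst μ ν (hN k u)
  have hD := fun k => aux_snd μ ν (hψ k).coeFn_toLp
  filter_upwards [hT2 (τ u g), aux_fst μ ν (Measure.ae_ae_of_ae_prod (hτ u g)), ae_all_iff.2 hA,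
    ae_all_iff.2 hB, ae_all_iff.2 hC, ae_all_iff.2 hD, aux_sum_ae (μ.prod ν) fun k =>
    ⟪(hψ k).toLp _, g⟫_ℂ • τ (N k u) ((hψ k).toLp _)] with z h1 h2 h3 h4 h5 h6 h7
  rw [h1, h7]
  rw [aux_int_tau ν ψ hψ g (fun t => τ u g (z.1, t)) (u z.1)
    (by filter_upwards [h2] with t ht; rw [ht, mul_comm])
    (fun k => (p k z.1 : ℂ) * ψ k z.2)]
  refine Finset.sum_congr rfl fun k _ => ?_
  rw [h4 k, Pi.smul_apply, h3 k, h5 k, h6 k, smul_eq_mul]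
  ring

lemma aux_T2_zero
    (hτ : ∀ u g, τ u g =ᵐ[μ.prod ν] fun z => u z.1 * g z.2)
    {m : ℕ} (ψ : Fin m → ℝ → ℂ) (hψ : ∀ k, MemLp (ψ k) 2 ν) (p : Fin m → ℝ → ℝ)
    (T2 : Lp ℂ 2 (μ.prod ν) →L[ℂ] Lp ℂ 2 (μ.prod ν))
    (hT2 : ∀ f : Lp ℂ 2 (μ.prod ν), ∀ᵐ z ∂(μ.prod ν),
        T2 f z = ∫ t, (∑ j, (p j z.1 : ℂ) * ψ j z.2 * star (ψ j t)) * f (z.1, t) ∂ν)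
    (f : Lp ℂ 2 (μ.prod ν)) (hf : ∀ k u, ⟪τ u ((hψ k).toLp _), f⟫_ℂ = 0) : T2 f = 0 := by
  have hsl : ∀ k, ∀ᵐ x ∂μ, Integrable (fun t => star (ψ k t) * f (x, t)) ν ∧
      ∫ t, star (ψ k t) * f (x, t) ∂ν = 0 := by
    intro k
    refine aux_slice ν μ (ψ k) (hψ k) (fun z => f z.swap)
      ((Lp.memLp f).comp_measurePreserving Measure.measurePreserving_swap) fun A hA => ?_
    have hi : MemLp (A.indicator fun _ => (1 : ℂ)) 2 μ :=
      memLp_indicator_const 2 hA 1 (Or.inr (measure_ne_top _ _))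
    have hsw := integral_prod_swap (μ := μ) (ν := ν)
      (fun z : ℝ × ℝ => star (ψ k z.2) * (A.indicator (fun _ => (1 : ℂ)) z.1) * f z)
    simp only [Prod.fst_swap, Prod.snd_swap] at hsw
    rw [hsw, ← hf k (hi.toLp _), L2.inner_def]
    apply integral_congr_ae
    filter_upwards [hτ (hi.toLp _) ((hψ k).toLp _), aux_snd μ ν (hψ k).coeFn_toLp,
      aux_fst μ ν hi.coeFn_toLp] with z h1 h2 h3
    rw [h1, h2, h3]
    by_cases hz : z.1 ∈ A <;> simp [hz, mul_comm]
  apply Lp.ext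
  filter_upwards [hT2 f, aux_fst μ ν (ae_all_iff.2 hsl), Lp.coeFn_zero ℂ 2 (μ.prod ν)]
    with z h1 h2 h3
  rw [h1, h3]
  rw [aux_int_split ν ψ (fun t => f (z.1, t)) (fun k => (p k z.1 : ℂ) * ψ k z.2)
    (fun k => (h2 k).1)]
  simp only [Pi.zero_apply]
  exact Finset.sum_eq_zero fun k _ => by rw [(h2 k).2, mul_zero]

end OperatorPart

lemma aux_on {n : ℕ} (μ : Measure ℝ) (φ : Fin n → ℝ → ℂ) (hφ : ∀ k, MemLp (φ k) 2 μ)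
    (hON : ∀ i j, ∫ x, star (φ i x) * φ j x ∂μ = if i = j then 1 else 0) (i j : Fin n) :
    inner ℂ ((hφ i).toLp (φ i)) ((hφ j).toLp (φ j)) = if i = j then (1 : ℂ) else 0 := by
  rw [← hON i j, L2.inner_def]
  apply integral_congr_ae
  filter_upwards [(hφ i).coeFn_toLp, (hφ j).coeFn_toLp] with x h1 h2
  rw [h1, h2]
  simp [mul_comm]

lemma aux_muI_ne (a b : ℝ) (hab : a < b) : muI a b Set.univ ≠ 0 := by
  simp [muI, hab]

theorem statement13
    (a b c d : ℝ) (hab : a < b) (hcd : c < d)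
    (n : ℕ) (hn : 1 ≤ n)
    (φ : Fin n → ℝ → ℂ)
    (hφL2 : ∀ k, MemLp (φ k) 2 (muI a b))
    (hφON : ∀ i j, ∫ x, star (φ i x) * φ j x ∂(muI a b) = if i = j then 1 else 0)
    (h : Fin n → ℝ → ℝ)
    (hhmeas : ∀ k, Measurable (h k))
    (hhbdd : ∀ k, ∃ C : ℝ, ∀ᵐ y ∂(muI c d), |h k y| ≤ C)
    (m : ℕ) (hm : 1 ≤ m)
    (ψ : Fin m → ℝ → ℂ)
    (hψL2 : ∀ j, MemLp (ψ j) 2 (muI c d))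
    (hψON : ∀ i j, ∫ y, star (ψ i y) * ψ j y ∂(muI c d) = if i = j then 1 else 0)
    (p : Fin m → ℝ → ℝ)
    (hpmeas : ∀ j, Measurable (p j))
    (hpbdd : ∀ j, ∃ C : ℝ, ∀ᵐ x ∂(muI a b), |p j x| ≤ C)
    (T1 T2 : Lp ℂ 2 ((muI a b).prod (muI c d)) →L[ℂ] Lp ℂ 2 ((muI a b).prod (muI c d)))
    (hT1sa : IsSelfAdjoint T1) (hT2sa : IsSelfAdjoint T2)
    (hT1 : ∀ f : Lp ℂ 2 ((muI a b).prod (muI c d)),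
      ∀ᵐ z ∂((muI a b).prod (muI c d)),
        T1 f z = ∫ s, (∑ k, φ k z.1 * star (φ k s) * (h k z.2 : ℂ)) * f (s, z.2) ∂(muI a b))
    (hT2 : ∀ f : Lp ℂ 2 ((muI a b).prod (muI c d)),
      ∀ᵐ z ∂((muI a b).prod (muI c d)),
        T2 f z = ∫ t, (∑ j, (p j z.1 : ℂ) * ψ j z.2 * star (ψ j t)) * f (z.1, t) ∂(muI c d))
    :
    spectrum ℂ T1 ∪ spectrum ℂ T2 ⊆ essentialSpectrum (T1 + T2) := by
  have : NullSingletonClass (muI a b) := by unfold muI; infer_instance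
  have : NullSingletonClass (muI c d) := by unfold muI; infer_instance
  have hex1 : ∀ k, ∃ M : Lp ℂ 2 (muI c d) →L[ℂ] Lp ℂ 2 (muI c d), ∀ g : Lp ℂ 2 (muI c d),
      M g =ᵐ[muI c d] fun y => (h k y : ℂ) * g y := by
    intro k
    obtain ⟨C, hC⟩ := hhbdd k
    refine aux_mul (muI c d) (fun y => (h k y : ℂ)) ?_ C ?_
    · exact Complex.measurable_ofReal.comp (hhmeas k)
    · filter_upwards [hC] with y hy
      rwa [Complex.norm_real, Real.norm_eq_abs]
  have hex2 : ∀ k, ∃ M : Lp ℂ 2 (muI a b) →L[ℂ] Lp ℂ 2 (muI a b), ∀ g : Lp ℂ 2 (muI a b),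
      M g =ᵐ[muI a b] fun y => (p k y : ℂ) * g y := by
    intro k
    obtain ⟨C, hC⟩ := hpbdd k
    refine aux_mul (muI a b) (fun y => (p k y : ℂ)) ?_ C ?_
    · exact Complex.measurable_ofReal.comp (hpmeas k)
    · filter_upwards [hC] with y hy
      rwa [Complex.norm_real, Real.norm_eq_abs]
  choose M hM using hex1
  choose N hN using hex2
  obtain ⟨τ, hτ⟩ := aux_tau (muI a b) (muI c d)
  have hin : ∀ u g u' g', inner ℂ (τ u g) (τ u' g') = inner ℂ u u' * inner ℂ g g' :=
    fun u g u' g' => aux_inner_of_ae (muI a b) (muI c d) u u' g g' _ _ (hτ u g) (hτ u' g')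
  have hA := aux_T1_tau (muI a b) (muI c d) τ hτ φ hφL2 h M hM T1 hT1
  have hB := aux_T1_zero (muI a b) (muI c d) τ hτ φ hφL2 h T1 hT1
  have hC := aux_T2_tau (muI a b) (muI c d) τ hτ ψ hψL2 p N hN T2 hT2
  have hD := aux_T2_zero (muI a b) (muI c d) τ hτ ψ hψL2 p T2 hT2
  have ha := aux_top (muI a b) (aux_muI_ne a b hab)
  have hc := aux_top (muI c d) (aux_muI_ne c d hcd)
  apply Set.union_subset
  · refine aux_half τ hin (fun k => (hφL2 k).toLp _) (aux_on _ φ hφL2 hφON)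
      (fun k => (hψL2 k).toLp _) M T1 T2 (hT1sa.add hT2sa) hA ?_ hB ha hc ?_
    · intro u g hg
      rw [hC]
      simp [hg]
    · intro k z hz ε hε
      exact aux_ess (muI c d) (fun y => (h k y : ℂ))
        (Complex.measurable_ofReal.comp (hhmeas k)) (M k) (hM k) z hz ε hε
  · rw [add_comm T1 T2]
    refine aux_half τ.flip (fun u g u' g' => by simp [hin, mul_comm])
      (fun k => (hψL2 k).toLp _) (aux_on _ ψ hψL2 hψON)
      (fun k => (hφL2 k).toLp _) N T2 T1 (hT2sa.add hT1sa) hC ?_ hD hc ha ?_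
    · intro u g hg
      rw [ContinuousLinearMap.flip_apply, hA]
      simp [hg]
    · intro k z hz ε hε
      exact aux_ess (muI a b) (fun y => (p k y : ℂ))
        (Complex.measurable_ofReal.comp (hpmeas k)) (N k) (hN k) z hz ε hε
end
end

section
/- The essential spectrum of the partial integral operator T = T₁ + T₂ with degenerate kernels is σ_ess(T₁ + T₂) = {0} ∪ (⋃_{i=1}^n Essran(h_i)) ∪ (⋃_{j=1}^m Essran(p_j)). -/
open MeasureTheory Complex

noncomputable section

/-- The essential range of a function `φ` with respect to a measure `μ` on `ℝ`. -/
def Essran (μ : MeasureTheory.Measure ℝ) (φ : ℝ → ℝ) : Set ℝ :=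
  {l : ℝ | ∀ ε > 0, 0 < μ {ξ : ℝ | l - ε < φ ξ ∧ φ ξ < l + ε}}

section abstractPart

variable {E : Type*} [NormedAddCommGroup E] [InnerProductSpace ℂ E] [CompleteSpace E]

/-- finite rank operators -/
def FinRk {E F : Type*} [NormedAddCommGroup E] [NormedSpace ℂ E] [NormedAddCommGroup F]
    [NormedSpace ℂ F] (K : E →L[ℂ] F) : Prop :=
  FiniteDimensional ℂ (LinearMap.range K.toLinearMap)

section
variable {E F G : Type*} [NormedAddCommGroup E] [NormedSpace ℂ E] [NormedAddCommGroup F]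
    [NormedSpace ℂ F] [NormedAddCommGroup G] [NormedSpace ℂ G]

lemma FinRk.of_le {K : E →L[ℂ] F} (V : Submodule ℂ F) [FiniteDimensional ℂ V]
    (h : ∀ x, K x ∈ V) : FinRk K := by
  have : LinearMap.range K.toLinearMap ≤ V := by
    rintro _ ⟨x, rfl⟩; exact h x
  exact Submodule.finiteDimensional_of_le this

lemma FinRk.comp_left {K : E →L[ℂ] F} (hK : FinRk K) (A : F →L[ℂ] G) : FinRk (A ∘L K) := by
  have : FiniteDimensional ℂ (LinearMap.range K.toLinearMap) := hK
  exact FinRk.of_le ((LinearMap.range K.toLinearMap).map A.toLinearMap)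
    (fun x => ⟨K x, ⟨x, rfl⟩, rfl⟩)

lemma FinRk.comp_right {K : F →L[ℂ] G} (hK : FinRk K) (A : E →L[ℂ] F) : FinRk (K ∘L A) := by
  have : FiniteDimensional ℂ (LinearMap.range K.toLinearMap) := hK
  exact FinRk.of_le (LinearMap.range K.toLinearMap) (fun x => ⟨A x, rfl⟩)

lemma FinRk.add {K L : E →L[ℂ] F} (hK : FinRk K) (hL : FinRk L) : FinRk (K + L) := by
  have : FiniteDimensional ℂ (LinearMap.range K.toLinearMap) := hK
  have : FiniteDimensional ℂ (LinearMap.range L.toLinearMap) := hL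
  exact FinRk.of_le (LinearMap.range K.toLinearMap ⊔ LinearMap.range L.toLinearMap)
    (fun x => Submodule.add_mem_sup ⟨x, rfl⟩ ⟨x, rfl⟩)

lemma FinRk.smul {K : E →L[ℂ] F} (hK : FinRk K) (c : ℂ) : FinRk (c • K) := by
  have : FiniteDimensional ℂ (LinearMap.range K.toLinearMap) := hK
  exact FinRk.of_le (LinearMap.range K.toLinearMap)
    (fun x => Submodule.smul_mem _ _ ⟨x, rfl⟩)

lemma FinRk.zero : FinRk (0 : E →L[ℂ] F) :=
  FinRk.of_le ⊥ (fun x => by simp)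

lemma FinRk.sum {ι : Type*} (s : Finset ι) {K : ι → E →L[ℂ] F} (hK : ∀ i, FinRk (K i)) :
    FinRk (∑ i ∈ s, K i) := by
  classical
  induction s using Finset.induction_on with
  | empty => simpa using FinRk.zero
  | insert a s ha ih => rw [Finset.sum_insert ha]; exact (hK a).add ih

lemma FinRk.compact {K : E →L[ℂ] F} (hK : FinRk K) : IsCompactOperator K := by
  have : FiniteDimensional ℂ (LinearMap.range K.toLinearMap) := hK
  have hp : ProperSpace (LinearMap.range K.toLinearMap) := FiniteDimensional.proper ℂ _
  refine ⟨Subtype.val '' (Metric.closedBall (0 : LinearMap.range K.toLinearMap) 1),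
    (isCompact_closedBall _ _).image continuous_subtype_val, ?_⟩
  have : Metric.closedBall (0:F) 1 ∈ nhds (K 0) := by
    simpa using Metric.closedBall_mem_nhds (0:F) one_pos
  filter_upwards [K.continuous.continuousAt this] with x hx
  refine ⟨⟨K x, ⟨x, rfl⟩⟩, ?_, rfl⟩
  simpa using hx

/-- An infinite-dimensional subspace meets the kernel of a finite rank operator. -/
lemma FinRk.exists_ker {K : E →L[ℂ] F} (hK : FinRk K) (V : Submodule ℂ E)
    (hV : ¬ FiniteDimensional ℂ V) : ∃ x ∈ V, x ≠ 0 ∧ K x = 0 := by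
  have : FiniteDimensional ℂ (LinearMap.range K.toLinearMap) := hK
  by_contra! hcon
  apply hV
  have hinj : Function.Injective (K.toLinearMap.rangeRestrict ∘ₗ V.subtype) := by
    rw [injective_iff_map_eq_zero]
    intro x hx
    by_contra hne
    refine hcon x x.2 (by simpa using hne) ?_
    exact congrArg Subtype.val hx
  exact FiniteDimensional.of_injective _ hinj
end

lemma exists_parametrix (T : E →L[ℂ] E) (hT : IsSelfAdjoint T) (z : ℂ)
    (hz : z ∉ essentialSpectrum T) :
    ∃ G K : E →L[ℂ] E, G * (T - z • 1) = 1 - K ∧ FinRk K := by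
  by_cases hs : z ∈ spectrum ℂ T
  · have hd : z ∈ discreteSpectrum T := by
      by_contra h; exact hz ⟨hs, h⟩
    obtain ⟨-, hiso, -, hfin⟩ := hd
    have hnor : IsStarNormal T := hT.isStarNormal
    have hcont : ∀ f : ℂ → ℂ, ContinuousOn f {z}ᶜ → ContinuousOn f (spectrum ℂ T) := by
      intro f hf w hw
      by_cases hwz : w = z
      · subst hwz
        have : nhdsWithin w (spectrum ℂ T) = pure w := by
          rw [← Set.insert_sdiff_self_of_mem hs, nhdsWithin_insert, hiso, sup_bot_eq]
        rw [ContinuousWithinAt, this]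
        exact tendsto_pure_nhds f w
      · exact (hf.continuousAt (isOpen_compl_singleton.mem_nhds hwz)).continuousWithinAt
    let f : ℂ → ℂ := fun w => if w = z then 1 else 0
    let g : ℂ → ℂ := fun w => (w - z)⁻¹
    have hf : ContinuousOn f (spectrum ℂ T) := hcont f <| by
      refine (continuousOn_const (c := (0:ℂ))).congr ?_
      intro w hw; simp [f, show w ≠ z from hw]
    have hg : ContinuousOn g (spectrum ℂ T) := hcont g <| by
      refine ContinuousOn.inv₀ (by fun_prop) ?_
      intro w hw; exact sub_ne_zero.2 hw
    have hid : cfc (fun w : ℂ => w - z) T = T - z • 1 := by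
      rw [cfc_sub (fun w => w) (fun _ => z) T, cfc_id' ℂ T, cfc_const z T,
        Algebra.algebraMap_eq_smul_one]
    refine ⟨cfc g T, cfc f T, ?_, ?_⟩
    · rw [← hid, ← cfc_mul g (fun w => w - z) T hg, ← cfc_one ℂ T, ← cfc_sub _ _ T _ hf]
      · apply cfc_congr
        intro w hw
        by_cases h : w = z
        · simp [g, f, h]
        · simp [g, f, h, sub_ne_zero.2 h]
      · fun_prop
    · refine FinRk.of_le (LinearMap.ker (T - z • (1 : E →L[ℂ] E)).toLinearMap) ?_
      intro x
      have : (T - z • 1) * cfc f T = 0 := by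
        rw [← hid, ← cfc_mul _ _ T (by fun_prop) hf, ← cfc_zero ℂ T]
        apply cfc_congr
        intro w hw
        by_cases h : w = z
        · simp [f, h]
        · simp [f, h]
      exact congrArg (fun A : E →L[ℂ] E => A x) this
  · rw [spectrum.notMem_iff, Algebra.algebraMap_eq_smul_one] at hs
    have : IsUnit (T - z • 1) := by
      rw [← neg_sub]; exact hs.neg
    obtain ⟨u, hu⟩ := this
    refine ⟨(↑u⁻¹ : E →L[ℂ] E), 0, ?_, FinRk.zero⟩
    rw [← hu]; simp

lemma not_mem_ess (T : E →L[ℂ] E) (hT : IsSelfAdjoint T) (l : ℝ) (U K : E →L[ℂ] E)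
    (hU : IsUnit U) (hK : FinRk K) (hUK : U * (T - (l : ℂ) • 1) = 1 - K) :
    (l : ℂ) ∉ essentialSpectrum T := by
  rintro ⟨hs, hd⟩
  apply hd
  set z : ℂ := (l : ℂ) with hz
  set A : E →L[ℂ] E := T - z • 1 with hA
  set N := LinearMap.ker A.toLinearMap with hN
  have hAsa : IsSelfAdjoint A := by
    refine hT.sub ?_
    rw [isSelfAdjoint_iff, star_smul]; simp [hz]
  have hfin : FiniteDimensional ℂ N := by
    have : FiniteDimensional ℂ (LinearMap.range K.toLinearMap) := hK
    refine Submodule.finiteDimensional_of_le (S₂ := LinearMap.range K.toLinearMap) ?_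
    intro x hx
    refine ⟨x, ?_⟩
    have h1 := congrArg (fun A : E →L[ℂ] E => A x) hUK
    have h2 : A x = 0 := hx
    simp [h2] at h1
    exact (sub_eq_zero.1 h1.symm).symm
  let P : E →L[ℂ] E := N.starProjection
  have hPfin : FinRk P := FinRk.of_le N (fun x => N.starProjection_apply_mem x)
  have hAP : A * P = 0 := by
    ext x
    exact N.starProjection_apply_mem x
  have hPsa : IsSelfAdjoint P := isSelfAdjoint_starProjection N
  have hPA : P * A = 0 := by
    have := congrArg star hAP
    rw [star_mul, hPsa.star_eq, hAsa.star_eq, star_zero] at this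
    exact this
  have hPP : P * P = P := N.isIdempotentElem_starProjection
  -- B = A + P is invertible
  have hBinj : ∀ x, (A + P) x = 0 → x = 0 := by
    intro x hx
    have h1 : P x = 0 := by
      have : (P * (A + P)) x = 0 := by
        rw [mul_apply_eq_comp, hx, map_zero]
      rwa [mul_add, hPA, hPP, zero_add] at this
    have h2 : A x = 0 := by
      simpa [h1] using hx
    have h3 : P x = x := Submodule.starProjection_eq_self_iff.2 h2
    rw [← h3, h1]
  have hBunit : IsUnit (A + P) := by
    have h1 : U * (A + P) = 1 - (K - U * P) := by
      rw [mul_add, hUK]; abel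
    have hK' : FinRk (K - U * P) := by
      have := hK.add ((hPfin.comp_left U).smul (-1))
      rw [neg_one_smul, ← sub_eq_add_neg] at this
      exact this
    have h2 := hK'.compact.hasEigenvalue_or_mem_resolventSet (μ := (1:ℂ)) one_ne_zero
    have h3 : IsUnit (U * (A + P)) := by
      rcases h2 with h2 | h2
      · exfalso
        obtain ⟨v, hv⟩ := h2.exists_hasEigenvector
        apply hv.2
        apply hBinj
        have h4 : (K - U * P) v = v := by simpa using hv.apply_eq_smul
        have h5 : (U * (A + P)) v = 0 := by rw [h1]; simp only [sub_apply, one_apply_eq_self] at h4 ⊢; rw [h4, sub_self]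
        obtain ⟨u, rfl⟩ := hU
        have : ((↑u⁻¹ : E →L[ℂ] E) * (↑u * (A + P))) v = 0 := by
          rw [mul_apply_eq_comp, h5, map_zero]
        rwa [← mul_assoc, Units.inv_mul, one_mul] at this
      · rw [spectrum.mem_resolventSet_iff, map_one] at h2
        rwa [h1]
    obtain ⟨u, rfl⟩ := hU
    simpa using h3
  refine ⟨hs, ?_, ?_, hfin⟩
  · have hopen : {w : ℂ | IsUnit (A + P - (w - z) • 1)} ∈ nhds z := by
      have hc : Continuous (fun w : ℂ => A + P - (w - z) • (1 : E →L[ℂ] E)) := by fun_prop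
      refine hc.continuousAt.preimage_mem_nhds (Units.isOpen.mem_nhds ?_)
      simpa using hBunit
    rw [← Filter.empty_mem_iff_bot, mem_nhdsWithin_iff_exists_mem_nhds_inter]
    refine ⟨_, hopen, ?_⟩
    rintro w ⟨hw, hws, hwz⟩
    exfalso
    apply hws
    have hwz' : w - z ≠ 0 := sub_ne_zero.2 hwz
    rw [spectrum.mem_resolventSet_iff, Algebra.algebraMap_eq_smul_one, ← IsUnit.neg_iff, neg_sub]
    obtain ⟨u, hu⟩ := hw
    have hTw : T - w • 1 = A - (w - z) • 1 := by rw [hA, sub_smul]; abel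
    have hcu : P * ↑u = ↑u * P := by
      rw [hu]
      simp only [mul_sub, mul_add, sub_mul, add_mul, hPA, hAP, mul_smul_comm, smul_mul_assoc, mul_one, one_mul]
    have hcu' : P * ↑u⁻¹ = ↑u⁻¹ * P := by
      exact ((Commute.units_inv_right (show Commute P ↑u from hcu))).eq
    have hX : T - w • 1 = ↑u - P := by rw [hTw, hu]; abel
    have hPu : P * ↑u = (1 - (w - z)) • P := by
      rw [hu]
      simp only [mul_sub, mul_add, hPA, mul_smul_comm, mul_one, hPP, sub_smul, one_smul, zero_add]
    have hXP : (↑u - P) * P = (-(w - z)) • P := by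
      rw [sub_mul, ← hcu, hPu, hPP, sub_smul, one_smul, neg_smul]; abel
    have hPX : P * (↑u - P) = (-(w - z)) • P := by
      rw [mul_sub, hPu, hPP, sub_smul, one_smul, neg_smul]; abel
    rw [hX]
    have e1 : P * (1 - P) = 0 := by rw [mul_sub, hPP, mul_one, sub_self]
    have e2 : (1 - P) * P = 0 := by rw [sub_mul, hPP, one_mul, sub_self]
    refine isUnit_iff_exists.2 ⟨↑u⁻¹ * (1 - P) - (w - z)⁻¹ • P, ?_, ?_⟩
    · rw [mul_sub, mul_smul_comm, hXP, ← mul_assoc, sub_mul ↑u P, Units.mul_inv, hcu', sub_mul, mul_assoc, e1, smul_smul]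
      rw [mul_neg, inv_mul_cancel₀ hwz', neg_one_smul]; simp
    · have h6 : ↑u⁻¹ * (1 - P) = (1 - P) * ↑u⁻¹ := by
        rw [mul_sub, sub_mul, hcu', mul_one, one_mul]
      rw [sub_mul, smul_mul_assoc, hPX, h6, mul_assoc, mul_sub (↑u⁻¹ : E →L[ℂ] E), Units.inv_mul, ← hcu', mul_sub, ← mul_assoc _ P, e2, smul_smul]
      rw [mul_neg, inv_mul_cancel₀ hwz', neg_one_smul]; simp
  · intro hbot
    have hP0 : P = 0 := by
      ext x
      have : P x ∈ N := N.starProjection_apply_mem x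
      rw [show N = ⊥ from hbot] at this
      simpa using this
    rw [hP0, add_zero] at hBunit
    apply hs
    rw [spectrum.mem_resolventSet_iff, Algebra.algebraMap_eq_smul_one, ← IsUnit.neg_iff, neg_sub]
    exact hBunit

end abstractPart

section tensorPart

open ContinuousLinearMap

variable {X Y H : Type*} [NormedAddCommGroup X] [InnerProductSpace ℂ X] [CompleteSpace X]
  [NormedAddCommGroup Y] [InnerProductSpace ℂ Y] [CompleteSpace Y]
  [NormedAddCommGroup H] [InnerProductSpace ℂ H] [CompleteSpace H]

/-- `∑ J M J†` -/
def diagOp {n : ℕ} (J : Fin n → Y →L[ℂ] H) (M : Fin n → Y →L[ℂ] Y) : H →L[ℂ] H :=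
  ∑ k, J k ∘L M k ∘L adjoint (J k)

lemma diagOp_mul {n : ℕ} (J : Fin n → Y →L[ℂ] H)
    (hJ : ∀ k l, adjoint (J k) ∘L J l = if k = l then 1 else 0) (M M' : Fin n → Y →L[ℂ] Y) :
    diagOp J M * diagOp J M' = diagOp J (M * M') := by
  unfold diagOp
  rw [Finset.sum_mul]
  refine Finset.sum_congr rfl fun k _ => ?_
  rw [Finset.mul_sum, Finset.sum_eq_single k]
  · ext x
    have := congrArg (fun A : Y →L[ℂ] Y => A (M' k (adjoint (J k) x))) (hJ k k)
    simp at this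
    simp [this]
  · intro l _ hl
    ext x
    have := congrArg (fun A : Y →L[ℂ] Y => A (M' l (adjoint (J l) x))) (hJ k l)
    simp [hl.symm] at this
    simp [this]
  · simp

lemma diagOp_apply_J {n : ℕ} (J : Fin n → Y →L[ℂ] H)
    (hJ : ∀ k l, adjoint (J k) ∘L J l = if k = l then 1 else 0) (M : Fin n → Y →L[ℂ] Y)
    (k : Fin n) (y : Y) : diagOp J M (J k y) = J k (M k y) := by
  unfold diagOp
  rw [sum_apply, Finset.sum_eq_single k]
  · have := congrArg (fun A : Y →L[ℂ] Y => A y) (hJ k k)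
    simp at this
    simp [this]
  · intro l _ hl
    have := congrArg (fun A : Y →L[ℂ] Y => A y) (hJ l k)
    simp [hl] at this
    simp [this]
  · simp

lemma diagOp_add {n : ℕ} (J : Fin n → Y →L[ℂ] H) (M M' : Fin n → Y →L[ℂ] Y) :
    diagOp J (M + M') = diagOp J M + diagOp J M' := by
  unfold diagOp
  rw [← Finset.sum_add_distrib]
  refine Finset.sum_congr rfl fun k _ => ?_
  ext x; simp

lemma diagOp_smul {n : ℕ} (J : Fin n → Y →L[ℂ] H) (c : ℂ) (M : Fin n → Y →L[ℂ] Y) :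
    diagOp J (c • M) = c • diagOp J M := by
  unfold diagOp
  rw [Finset.smul_sum]
  refine Finset.sum_congr rfl fun k _ => ?_
  ext x; simp

lemma diagOp_isUnit {n : ℕ} (J : Fin n → Y →L[ℂ] H)
    (hJ : ∀ k l, adjoint (J k) ∘L J l = if k = l then 1 else 0) (M : Fin n → Y →L[ℂ] Y)
    (z : ℂ) (hz : z ≠ 0) (hM : ∀ k, IsUnit (M k - z • 1)) :
    IsUnit (diagOp J M - z • 1) := by
  choose u hu using hM
  let R : Fin n → Y →L[ℂ] Y := fun k => ↑(u k)⁻¹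
  have h1 : (M - z • 1) * R = 1 := by
    funext k; change (M k - z • 1) * (↑(u k)⁻¹ : Y →L[ℂ] Y) = 1
    rw [← hu, Units.mul_inv]
  have h2 : R * (M - z • 1) = 1 := by
    funext k; change (↑(u k)⁻¹ : Y →L[ℂ] Y) * (M k - z • 1) = 1
    rw [← hu, Units.inv_mul]
  have h1' : M * R = 1 + z • R := by
    rw [← h1]; simp [sub_mul]
  have h2' : R * M = 1 + z • R := by
    rw [← h2]; simp [mul_sub]
  refine isUnit_iff_exists.2 ⟨diagOp J (R + z⁻¹ • 1) - z⁻¹ • 1, ?_, ?_⟩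
  · rw [sub_mul, mul_sub, diagOp_mul J hJ, mul_add, h1']
    simp only [diagOp_add, diagOp_smul, mul_smul_comm, smul_mul_assoc, mul_one, one_mul, smul_sub,
      smul_add, smul_smul, mul_inv_cancel₀ hz, inv_mul_cancel₀ hz, one_smul]
    abel
  · rw [sub_mul, mul_sub, diagOp_mul J hJ, add_mul, h2']
    simp only [diagOp_add, diagOp_smul, mul_smul_comm, smul_mul_assoc, mul_one, one_mul, smul_sub,
      smul_add, smul_smul, mul_inv_cancel₀ hz, inv_mul_cancel₀ hz, one_smul]
    abel

/-- `z` is an approximate eigenvalue of infinite multiplicity. -/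
def ApproxInf (M : Y →L[ℂ] Y) (z : ℂ) : Prop :=
  ∀ ε > 0, ∃ V : Submodule ℂ Y, ¬ FiniteDimensional ℂ V ∧ ∀ g ∈ V, ‖M g - z • g‖ ≤ ε * ‖g‖

lemma diagOp_no_parametrix {n : ℕ} (J : Fin n → Y →L[ℂ] H)
    (hJ : ∀ k l, adjoint (J k) ∘L J l = if k = l then 1 else 0) (M : Fin n → Y →L[ℂ] Y)
    (z : ℂ) (G K : H →L[ℂ] H) (hG : G * (diagOp J M - z • 1) = 1 - K) (hK : FinRk K)
    (k : Fin n) (hM : ApproxInf (M k) z) : False := by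
  have hiso : ∀ y, ‖J k y‖ = ‖y‖ := by
    intro y
    have := congrArg (fun A : Y →L[ℂ] Y => A y) (hJ k k)
    simp at this
    have h2 : (inner ℂ (J k y) (J k y) : ℂ) = inner ℂ y y := by
      rw [← adjoint_inner_left, this]
    rw [inner_self_eq_norm_sq_to_K, inner_self_eq_norm_sq_to_K] at h2
    have h3 : ‖J k y‖ ^ 2 = ‖y‖ ^ 2 := by exact_mod_cast h2
    exact (sq_eq_sq₀ (norm_nonneg _) (norm_nonneg _)).1 h3
  have hpos : (0:ℝ) < 1 / (2 * (‖G‖ + 1)) := by positivity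
  obtain ⟨V, hV, hVg⟩ := hM _ hpos
  obtain ⟨y, hyV, hy0, hKy⟩ := (hK.comp_right (J k)).exists_ker V hV
  have h1 := congrArg (fun A : H →L[ℂ] H => A (J k y)) hG
  have h2 : K (J k y) = 0 := hKy
  simp only [mul_apply_eq_comp, sub_apply, one_apply_eq_self, h2, sub_zero, smul_apply,
    diagOp_apply_J J hJ] at h1
  rw [← map_smul, ← map_sub] at h1
  have h3 : ‖y‖ ≤ ‖G‖ * (1 / (2 * (‖G‖ + 1)) * ‖y‖) := by
    calc ‖y‖ = ‖G (J k (M k y - z • y))‖ := by rw [h1, hiso]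
      _ ≤ ‖G‖ * ‖J k (M k y - z • y)‖ := G.le_opNorm _
      _ ≤ _ := by
        rw [hiso]; exact mul_le_mul_of_nonneg_left (hVg y hyV) (norm_nonneg _)
  have hy : 0 < ‖y‖ := norm_pos_iff.2 hy0
  have h4 : ‖G‖ * (1 / (2 * (‖G‖ + 1)) * ‖y‖) < ‖y‖ := by
    have : ‖G‖ * (1 / (2 * (‖G‖ + 1))) < 1 := by
      rw [mul_one_div, div_lt_one (by positivity)]
      linarith [norm_nonneg G]
    nlinarith
  linarith

lemma FinRk.prod' {K : X →L[ℂ] Y} {L : X →L[ℂ] H} (hK : FinRk K) (hL : FinRk L) :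
    FinRk (K.prod L) := by
  have h : K.prod L = inl ℂ Y H ∘L K + inr ℂ Y H ∘L L := by
    ext x <;> simp
  rw [h]
  exact (hK.comp_left _).add (hL.comp_left _)

lemma exists_orth {n : ℕ} (φ : Fin n → X) (K : X →L[ℂ] H) (hK : FinRk K)
    (hX : ¬ FiniteDimensional ℂ X) : ∃ u : X, u ≠ 0 ∧ K u = 0 ∧ ∀ k, inner ℂ (φ k) u = 0 := by
  let P : X →L[ℂ] X := ∑ k, (innerSL ℂ (φ k)).smulRight (φ k)
  have hP : FinRk P := FinRk.sum _ fun k => FinRk.of_le (ℂ ∙ (φ k)) fun x => by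
    simpa using Submodule.smul_mem _ _ (Submodule.mem_span_singleton_self _)
  obtain ⟨u, -, hu, hu2⟩ := (hK.prod' hP).exists_ker ⊤
    (fun h => hX (Module.finite_def.2 (Module.Finite.iff_fg.1 h)))
  have h1 : K u = 0 := congrArg Prod.fst hu2
  have h2 : P u = 0 := congrArg Prod.snd hu2
  have h3 : ∑ k, ‖(inner ℂ (φ k) u : ℂ)‖ ^ 2 = 0 := by
    have h4 : inner ℂ (P u) u = (0:ℂ) := by rw [h2, inner_zero_left]
    simp only [P, sum_apply, sum_inner, smulRight_apply, innerSL_apply_apply, inner_smul_left] at h4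
    simp only [RCLike.conj_mul] at h4
    exact RCLike.ofReal_eq_zero.1 (by exact_mod_cast h4)
  refine ⟨u, hu, h1, fun k => ?_⟩
  have := (Finset.sum_eq_zero_iff_of_nonneg (fun i _ => by positivity)).1 h3 k (Finset.mem_univ _)
  simpa using this

theorem abstract_main (t : X →L[ℂ] Y →L[ℂ] H)
    (ht : ∀ u u' v v', inner ℂ (t u v) (t u' v') = inner ℂ u u' * inner ℂ v v')
    (hX : ¬ FiniteDimensional ℂ X) (hY : ¬ FiniteDimensional ℂ Y)
    {n m : ℕ} (φ : Fin n → X) (ψ : Fin m → Y)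
    (hφ : ∀ i j, inner ℂ (φ i) (φ j) = if i = j then (1:ℂ) else 0)
    (hψ : ∀ i j, inner ℂ (ψ i) (ψ j) = if i = j then (1:ℂ) else 0)
    (M : Fin n → Y →L[ℂ] Y) (Q : Fin m → X →L[ℂ] X) (T1 T2 : H →L[ℂ] H)
    (hT1 : T1 = diagOp (fun k => t (φ k)) M) (hT2 : T2 = diagOp (fun j => t.flip (ψ j)) Q)
    (hT1sa : IsSelfAdjoint T1) (hT2sa : IsSelfAdjoint T2)
    (S : Fin n → Set ℝ) (R : Fin m → Set ℝ)
    (hS : ∀ k, ∀ l ∈ S k, ApproxInf (M k) (l : ℂ))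
    (hS' : ∀ k, ∀ l ∉ S k, IsUnit (M k - (l : ℂ) • 1))
    (hR : ∀ k, ∀ l ∈ R k, ApproxInf (Q k) (l : ℂ))
    (hR' : ∀ k, ∀ l ∉ R k, IsUnit (Q k - (l : ℂ) • 1)) :
    essentialSpectrum (T1 + T2) =
      {0} ∪ (⋃ i : Fin n, (fun r : ℝ => (r : ℂ)) '' S i) ∪
        (⋃ j : Fin m, (fun r : ℝ => (r : ℂ)) '' R j) := by
  set J : Fin n → Y →L[ℂ] H := fun k => t (φ k) with hJdef
  set L : Fin m → X →L[ℂ] H := fun j => t.flip (ψ j) with hLdef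
  have hJt : ∀ k u v, adjoint (J k) (t u v) = (inner ℂ (φ k) u : ℂ) • v := by
    intro k u v
    refine ext_inner_left ℂ fun w => ?_
    rw [adjoint_inner_right, inner_smul_right]
    exact ht _ _ _ _
  have hLt : ∀ k u v, adjoint (L k) (t u v) = (inner ℂ (ψ k) v : ℂ) • u := by
    intro k u v
    refine ext_inner_left ℂ fun w => ?_
    rw [adjoint_inner_right, inner_smul_right, mul_comm]
    exact ht _ _ _ _
  have hJ : ∀ k l, adjoint (J k) ∘L J l = if k = l then 1 else 0 := by
    intro k l
    ext v
    have := hJt k (φ l) v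
    rw [hφ] at this
    change adjoint (J k) (t (φ l) v) = _
    rw [this]; split_ifs <;> simp
  have hL : ∀ k l, adjoint (L k) ∘L L l = if k = l then 1 else 0 := by
    intro k l
    ext v
    have := hLt k v (ψ l)
    rw [hψ] at this
    change adjoint (L k) (t v (ψ l)) = _
    rw [this]; split_ifs <;> simp
  have hTsa : IsSelfAdjoint (T1 + T2) := hT1sa.add hT2sa
  have hF12 : FinRk (T1 * T2) := by
    rw [hT1, hT2, diagOp, diagOp, Finset.sum_mul]
    refine FinRk.sum _ fun k => ?_
    rw [Finset.mul_sum]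
    refine FinRk.sum _ fun j => ?_
    have : FinRk (adjoint (J k) ∘L L j) := by
      refine FinRk.of_le (ℂ ∙ (ψ j)) fun x => ?_
      change adjoint (J k) (t x (ψ j)) ∈ _
      rw [hJt]
      exact Submodule.smul_mem _ _ (Submodule.mem_span_singleton_self _)
    exact (this.comp_left (J k ∘L M k)).comp_right (Q j ∘L adjoint (L j))
  have hF21 : FinRk (T2 * T1) := by
    rw [hT1, hT2, diagOp, diagOp, Finset.sum_mul]
    refine FinRk.sum _ fun k => ?_
    rw [Finset.mul_sum]
    refine FinRk.sum _ fun j => ?_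
    have : FinRk (adjoint (L k) ∘L J j) := by
      refine FinRk.of_le (ℂ ∙ (φ j)) fun x => ?_
      change adjoint (L k) (t (φ j) x) ∈ _
      rw [hLt]
      exact Submodule.smul_mem _ _ (Submodule.mem_span_singleton_self _)
    exact (this.comp_left (L k ∘L Q k)).comp_right (M j ∘L adjoint (J j))
  have e12 : ∀ z : ℂ, (T1 - z • 1) * (T2 - z • 1) = T1 * T2 - z • (T1 + T2 - z • 1) := by
    intro z
    simp only [sub_mul, mul_sub, smul_mul_assoc, mul_smul_comm, mul_one, one_mul, smul_add, smul_sub]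
    abel
  have e21 : ∀ z : ℂ, (T2 - z • 1) * (T1 - z • 1) = T2 * T1 - z • (T1 + T2 - z • 1) := by
    intro z
    simp only [sub_mul, mul_sub, smul_mul_assoc, mul_smul_comm, mul_one, one_mul, smul_add, smul_sub]
    abel
  have key : ∀ (z : ℂ) (A B : H →L[ℂ] H), z ≠ 0 → FinRk (A * B) →
      (A - z • 1) * (B - z • 1) = A * B - z • (T1 + T2 - z • 1) →
      z ∉ essentialSpectrum (T1 + T2) →
      ∃ G K : H →L[ℂ] H, G * (B - z • 1) = 1 - K ∧ FinRk K := by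
    intro z A B hz hAB e hzess
    obtain ⟨G, K, hG, hK⟩ := exists_parametrix _ hTsa z hzess
    refine ⟨(-z⁻¹) • (G * (A - z • 1)), K + z⁻¹ • (G * (A * B)), ?_,
      hK.add ((hAB.comp_left G).smul _)⟩
    rw [smul_mul_assoc, mul_assoc, e, mul_sub, mul_smul_comm, hG, neg_smul, smul_sub, smul_smul,
      inv_mul_cancel₀ hz, one_smul]
    abel
  apply Set.Subset.antisymm
  · intro z hz
    by_contra hcon
    simp only [Set.mem_union, not_or, Set.mem_iUnion, not_exists, Set.mem_singleton_iff] at hcon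
    obtain ⟨⟨hz0, hzS⟩, hzR⟩ := hcon
    have hre : z = ((z.re : ℝ) : ℂ) := hTsa.mem_spectrum_eq_re hz.1
    have hu1 : IsUnit (T1 - z • 1) := by
      rw [hT1]
      refine diagOp_isUnit J hJ M z hz0 fun k => ?_
      rw [hre]
      exact hS' k _ fun h => hzS k ⟨_, h, hre.symm⟩
    have hu2 : IsUnit (T2 - z • 1) := by
      rw [hT2]
      refine diagOp_isUnit L hL Q z hz0 fun k => ?_
      rw [hre]
      exact hR' k _ fun h => hzR k ⟨_, h, hre.symm⟩
    obtain ⟨u, hu⟩ := hu1.mul hu2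
    have hUu : IsUnit ((-z) • (↑u⁻¹ : H →L[ℂ] H)) := by
      refine isUnit_iff_exists.2 ⟨(-z⁻¹) • (u : H →L[ℂ] H), ?_, ?_⟩
      · rw [smul_mul_smul_comm, Units.inv_mul, neg_mul_neg, mul_inv_cancel₀ hz0, one_smul]
      · rw [smul_mul_smul_comm, Units.mul_inv, neg_mul_neg, inv_mul_cancel₀ hz0, one_smul]
    refine not_mem_ess (T1 + T2) hTsa z.re _ (↑u⁻¹ * (T1 * T2)) hUu (hF12.comp_left _) ?_
      (hre ▸ hz)
    rw [← hre]
    have h5 : (-z) • (T1 + T2 - z • 1) = ↑u - T1 * T2 := by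
      rw [hu, e12, neg_smul]; abel
    rw [smul_mul_assoc, ← mul_smul_comm, h5, mul_sub, Units.inv_mul]
  · intro z hz
    by_contra hcon
    by_cases hz0 : z = 0
    · subst hz0
      obtain ⟨G, K, hG, hK⟩ := exists_parametrix _ hTsa 0 hcon
      obtain ⟨v, hv0, -, hv⟩ := exists_orth ψ (0 : Y →L[ℂ] H) FinRk.zero hY
      obtain ⟨u, hu0, hu1, hu⟩ := exists_orth φ (K ∘L t.flip v) (hK.comp_right _) hX
      have h1 : K (t u v) = 0 := hu1
      have h2 : T1 (t u v) = 0 := by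
        rw [hT1, diagOp, sum_apply]
        refine Finset.sum_eq_zero fun k _ => ?_
        simp [hJt, hu]
      have h3 : T2 (t u v) = 0 := by
        rw [hT2, diagOp, sum_apply]
        refine Finset.sum_eq_zero fun k _ => ?_
        simp [hLt, hv]
      have h4 := congrArg (fun A : H →L[ℂ] H => A (t u v)) hG
      simp [h1, h2, h3] at h4
      have h5 := ht u u v v
      rw [← h4, inner_zero_left] at h5
      rcases mul_eq_zero.1 h5.symm with h | h
      · exact hu0 (inner_self_eq_zero.1 h)
      · exact hv0 (inner_self_eq_zero.1 h)
    · rcases hz with (hz | hz) | hz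
      · exact hz0 hz
      · obtain ⟨k, l, hl, rfl⟩ := Set.mem_iUnion.1 hz
        obtain ⟨G, K, hG, hK⟩ := key _ T2 T1 hz0 hF21 (e21 _) hcon
        rw [hT1] at hG
        exact diagOp_no_parametrix J hJ M _ G K hG hK k (hS k l hl)
      · obtain ⟨k, l, hl, rfl⟩ := Set.mem_iUnion.1 hz
        obtain ⟨G, K, hG, hK⟩ := key _ T1 T2 hz0 hF12 (e12 _) hcon
        rw [hT2] at hG
        exact diagOp_no_parametrix L hL Q _ G K hG hK k (hR k l hl)

end tensorPart

section concretePart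

open ContinuousLinearMap

lemma memLp_tens {μ ν : Measure ℝ} [IsFiniteMeasure μ] [IsFiniteMeasure ν] {u v : ℝ → ℂ}
    (hu : MemLp u 2 μ) (hv : MemLp v 2 ν) :
    MemLp (fun z : ℝ × ℝ => u z.1 * v z.2) 2 (μ.prod ν) := by
  have h1 : AEStronglyMeasurable (fun z : ℝ × ℝ => u z.1 * v z.2) (μ.prod ν) :=
    hu.1.comp_fst.mul hv.1.comp_snd
  rw [memLp_two_iff_integrable_sq_norm h1]
  have := ((memLp_two_iff_integrable_sq_norm hu.1).1 hu).mul_prod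
    ((memLp_two_iff_integrable_sq_norm hv.1).1 hv)
  refine this.congr (Filter.Eventually.of_forall fun z => ?_)
  simp [mul_pow]

variable {μ ν : Measure ℝ} [IsFiniteMeasure μ] [IsFiniteMeasure ν]

/-- the elementary tensor -/
def tensFun (u : Lp ℂ 2 μ) (v : Lp ℂ 2 ν) : Lp ℂ 2 (μ.prod ν) :=
  (memLp_tens (Lp.memLp u) (Lp.memLp v)).toLp _

lemma tensFun_coe (u : Lp ℂ 2 μ) (v : Lp ℂ 2 ν) :
    tensFun u v =ᵐ[μ.prod ν] fun z => u z.1 * v z.2 := MemLp.coeFn_toLp _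

lemma ae_fst {P : ℝ → Prop} (h : ∀ᵐ x ∂μ, P x) : ∀ᵐ z ∂(μ.prod ν), P z.1 :=
  Measure.quasiMeasurePreserving_fst.ae h

lemma ae_snd {P : ℝ → Prop} (h : ∀ᵐ x ∂ν, P x) : ∀ᵐ z ∂(μ.prod ν), P z.2 :=
  Measure.quasiMeasurePreserving_snd.ae h

lemma ae_swap {P : ℝ × ℝ → Prop} (h : ∀ᵐ z ∂(μ.prod ν), P z) :
    ∀ᵐ y ∂ν, ∀ᵐ x ∂μ, P (x, y) := by
  have : ∀ᵐ z ∂(ν.prod μ), P z.swap :=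
    (Measure.measurePreserving_swap (μ := ν) (ν := μ)).quasiMeasurePreserving.ae h
  exact Measure.ae_ae_of_ae_prod this

lemma tensFun_inner (u u' : Lp ℂ 2 μ) (v v' : Lp ℂ 2 ν) :
    inner ℂ (tensFun u v) (tensFun u' v') = inner ℂ u u' * (inner ℂ v v' : ℂ) := by
  rw [L2.inner_def, L2.inner_def, L2.inner_def, ← integral_prod_mul]
  apply integral_congr_ae
  filter_upwards [tensFun_coe u v, tensFun_coe u' v'] with z h1 h2
  simp only [h1, h2, RCLike.inner_apply, map_mul]
  ring

lemma tensFun_norm (u : Lp ℂ 2 μ) (v : Lp ℂ 2 ν) : ‖tensFun u v‖ = ‖u‖ * ‖v‖ := by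
  have h := tensFun_inner u u v v
  simp only [inner_self_eq_norm_sq_to_K] at h
  have h2 : ‖tensFun u v‖ ^ 2 = (‖u‖ * ‖v‖) ^ 2 := by
    rw [mul_pow]; exact_mod_cast h
  exact (sq_eq_sq₀ (norm_nonneg _) (by positivity)).1 h2

/-- the tensor product map -/
def tens (μ ν : Measure ℝ) [IsFiniteMeasure μ] [IsFiniteMeasure ν] :
    Lp ℂ 2 μ →L[ℂ] Lp ℂ 2 ν →L[ℂ] Lp ℂ 2 (μ.prod ν) :=
  LinearMap.mkContinuous₂
    (LinearMap.mk₂ ℂ tensFun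
      (fun u u' v => by
        apply Lp.ext
        filter_upwards [tensFun_coe (u + u') v, tensFun_coe u v, tensFun_coe u' v,
          Lp.coeFn_add (tensFun u v) (tensFun u' v), ae_fst (Lp.coeFn_add u u')] with z h1 h2 h3 h4 h5
        simp only [h1, h4, Pi.add_apply, h2, h3, h5]; ring)
      (fun c u v => by
        apply Lp.ext
        filter_upwards [tensFun_coe (c • u) v, tensFun_coe u v,
          Lp.coeFn_smul c (tensFun u v), ae_fst (Lp.coeFn_smul c u)] with z h1 h2 h4 h5
        simp only [h1, h4, Pi.smul_apply, h2, h5, smul_eq_mul]; ring)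
      (fun u v v' => by
        apply Lp.ext
        filter_upwards [tensFun_coe u (v + v'), tensFun_coe u v, tensFun_coe u v',
          Lp.coeFn_add (tensFun u v) (tensFun u v'), ae_snd (Lp.coeFn_add v v')] with z h1 h2 h3 h4 h5
        simp only [h1, h4, Pi.add_apply, h2, h3, h5]; ring)
      (fun c u v => by
        apply Lp.ext
        filter_upwards [tensFun_coe u (c • v), tensFun_coe u v,
          Lp.coeFn_smul c (tensFun u v), ae_snd (Lp.coeFn_smul c v)] with z h1 h2 h4 h5
        simp only [h1, h4, Pi.smul_apply, h2, h5, smul_eq_mul]; ring))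
    1 (fun u v => by simp [tensFun_norm])

lemma tens_apply (u : Lp ℂ 2 μ) (v : Lp ℂ 2 ν) : tens μ ν u v = tensFun u v := rfl

lemma tens_inner (u u' : Lp ℂ 2 μ) (v v' : Lp ℂ 2 ν) :
    inner ℂ (tens μ ν u v) (tens μ ν u' v') = inner ℂ u u' * (inner ℂ v v' : ℂ) :=
  tensFun_inner u u' v v'

lemma tens_coe {φ g : ℝ → ℂ} (hφ : MemLp φ 2 μ) (hg : MemLp g 2 ν) :
    tens μ ν (hφ.toLp φ) (hg.toLp g) =ᵐ[μ.prod ν] fun z => φ z.1 * g z.2 := by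
  filter_upwards [tensFun_coe (hφ.toLp φ) (hg.toLp g), ae_fst hφ.coeFn_toLp,
    ae_snd hg.coeFn_toLp] with z h1 h2 h3
  rw [tens_apply, h1, h2, h3]

lemma toLp_inner {φ φ' : ℝ → ℂ} (hφ : MemLp φ 2 μ) (hφ' : MemLp φ' 2 μ) :
    inner ℂ (hφ.toLp φ) (hφ'.toLp φ') = ∫ x, star (φ x) * φ' x ∂μ := by
  rw [L2.inner_def]
  apply integral_congr_ae
  filter_upwards [hφ.coeFn_toLp, hφ'.coeFn_toLp] with x h1 h2
  rw [h1, h2, RCLike.inner_apply, mul_comm]; rfl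

lemma memLp_star {φ : ℝ → ℂ} (hφ : MemLp φ 2 μ) : MemLp (fun x => star (φ x)) 2 μ := hφ.star

lemma int1 {φ : ℝ → ℂ} (hφ : MemLp φ 2 μ) (f : Lp ℂ 2 (μ.prod ν)) :
    Integrable (fun z : ℝ × ℝ => star (φ z.1) * f z) (μ.prod ν) := by
  have h1 : MemLp (fun z : ℝ × ℝ => star (φ z.1) * 1) 2 (μ.prod ν) :=
    memLp_tens (memLp_star hφ) (memLp_const 1)
  have := h1.integrable_mul (Lp.memLp f)
  exact this.congr (Filter.Eventually.of_forall fun z => by simp)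

lemma int2 {ψ : ℝ → ℂ} (hψ : MemLp ψ 2 ν) (f : Lp ℂ 2 (μ.prod ν)) :
    Integrable (fun z : ℝ × ℝ => star (ψ z.2) * f z) (μ.prod ν) := by
  have h1 : MemLp (fun z : ℝ × ℝ => 1 * star (ψ z.2)) 2 (μ.prod ν) :=
    memLp_tens (memLp_const 1) (memLp_star hψ)
  have := h1.integrable_mul (Lp.memLp f)
  exact this.congr (Filter.Eventually.of_forall fun z => by simp)

lemma form1 {n : ℕ} {φ : Fin n → ℝ → ℂ} (hφ : ∀ k, MemLp (φ k) 2 μ) (h : Fin n → ℝ → ℝ)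
    (f : Lp ℂ 2 (μ.prod ν)) : ∀ᵐ z ∂(μ.prod ν),
    ∫ s, (∑ k, φ k z.1 * star (φ k s) * (h k z.2 : ℂ)) * f (s, z.2) ∂μ =
      ∑ k, φ k z.1 * (h k z.2 : ℂ) * ∫ s, star (φ k s) * f (s, z.2) ∂μ := by
  have h1 : ∀ᵐ y ∂ν, ∀ k, Integrable (fun s => star (φ k s) * f (s, y)) μ :=
    ae_all_iff.2 fun k => (int1 (hφ k) f).prod_left_ae
  filter_upwards [ae_snd h1] with z hz
  simp_rw [← integral_const_mul]
  rw [← integral_finsetSum _ (fun k _ => (hz k).const_mul _)]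
  congr 1
  funext s
  rw [Finset.sum_mul]
  refine Finset.sum_congr rfl fun k _ => ?_
  ring

lemma form2 {m : ℕ} {ψ : Fin m → ℝ → ℂ} (hψ : ∀ k, MemLp (ψ k) 2 ν) (p : Fin m → ℝ → ℝ)
    (f : Lp ℂ 2 (μ.prod ν)) : ∀ᵐ z ∂(μ.prod ν),
    ∫ t, (∑ j, (p j z.1 : ℂ) * ψ j z.2 * star (ψ j t)) * f (z.1, t) ∂ν =
      ∑ j, (p j z.1 : ℂ) * ψ j z.2 * ∫ t, star (ψ j t) * f (z.1, t) ∂ν := by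
  have h1 : ∀ᵐ x ∂μ, ∀ k, Integrable (fun t => star (ψ k t) * f (x, t)) ν :=
    ae_all_iff.2 fun k => (int2 (hψ k) f).prod_right_ae
  filter_upwards [ae_fst h1] with z hz
  simp_rw [← integral_const_mul]
  rw [← integral_finsetSum _ (fun k _ => (hz k).const_mul _)]
  congr 1
  funext s
  rw [Finset.sum_mul]
  refine Finset.sum_congr rfl fun k _ => ?_
  ring

lemma cf_zero1 {φ : ℝ → ℂ} (hφ : MemLp φ 2 μ) (f : Lp ℂ 2 (μ.prod ν))
    (hf : ∀ g, inner ℂ (tens μ ν (hφ.toLp φ) g) f = (0:ℂ)) :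
    ∀ᵐ y ∂ν, ∫ s, star (φ s) * f (s, y) ∂μ = 0 := by
  have hI := int1 hφ f
  refine Integrable.ae_eq_zero_of_forall_setIntegral_eq_zero hI.integral_prod_right ?_
  intro S hS _
  have hg : MemLp (S.indicator (fun _ => (1:ℂ))) 2 ν := memLp_indicator_const 2 hS 1 (Or.inr (measure_ne_top _ _))
  rw [← hf (hg.toLp _), L2.inner_def]
  have h1 : ∫ z, inner ℂ ((tens μ ν (hφ.toLp φ) (hg.toLp _)) z) (f z) ∂(μ.prod ν) =
      ∫ z, (Set.univ ×ˢ S).indicator (fun z => star (φ z.1) * f z) z ∂(μ.prod ν) := by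
    apply integral_congr_ae
    filter_upwards [tens_coe hφ hg] with z hz
    rw [hz, RCLike.inner_apply]
    by_cases h : z.2 ∈ S <;> simp [h, Set.indicator, mul_comm]
  rw [h1, integral_prod_symm _ (hI.indicator (MeasurableSet.univ.prod hS)), ← integral_indicator hS]
  congr 1
  funext y
  by_cases h : y ∈ S <;> simp [h, Set.indicator]

lemma cf_zero2 {ψ : ℝ → ℂ} (hψ : MemLp ψ 2 ν) (f : Lp ℂ 2 (μ.prod ν))
    (hf : ∀ g, inner ℂ (tens μ ν g (hψ.toLp ψ)) f = (0:ℂ)) :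
    ∀ᵐ x ∂μ, ∫ t, star (ψ t) * f (x, t) ∂ν = 0 := by
  have hI := int2 hψ f
  refine Integrable.ae_eq_zero_of_forall_setIntegral_eq_zero hI.integral_prod_left ?_
  intro S hS _
  have hg : MemLp (S.indicator (fun _ => (1:ℂ))) 2 μ := memLp_indicator_const 2 hS 1 (Or.inr (measure_ne_top _ _))
  rw [← hf (hg.toLp _), L2.inner_def]
  have h1 : ∫ z, inner ℂ ((tens μ ν (hg.toLp _) (hψ.toLp ψ)) z) (f z) ∂(μ.prod ν) =
      ∫ z, (S ×ˢ Set.univ).indicator (fun z => star (ψ z.2) * f z) z ∂(μ.prod ν) := by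
    apply integral_congr_ae
    filter_upwards [tens_coe hg hψ] with z hz
    rw [hz, RCLike.inner_apply]
    by_cases h : z.1 ∈ S <;> simp [h, Set.indicator, mul_comm]
  rw [h1, integral_prod _ (hI.indicator (hS.prod MeasurableSet.univ)), ← integral_indicator hS]
  congr 1
  funext y
  by_cases h : y ∈ S <;> simp [h, Set.indicator]

lemma memLp_bdd_mul {h : ℝ → ℝ} (hm : Measurable h) (hb : ∃ C : ℝ, ∀ᵐ y ∂ν, |h y| ≤ C)
    (g : Lp ℂ 2 ν) : MemLp (fun y => (h y : ℂ) * g y) 2 ν := by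
  obtain ⟨C, hC⟩ := hb
  refine (Lp.memLp g).of_le_mul (c := C) ?_ ?_
  · exact (Complex.measurable_ofReal.comp hm).aestronglyMeasurable.mul (Lp.aestronglyMeasurable g)
  · filter_upwards [hC] with y hy
    rw [norm_mul, Complex.norm_real]
    exact mul_le_mul_of_nonneg_right hy (norm_nonneg _)

lemma eq_diagOp {Y H : Type*} [NormedAddCommGroup Y] [InnerProductSpace ℂ Y] [CompleteSpace Y]
    [NormedAddCommGroup H] [InnerProductSpace ℂ H] [CompleteSpace H] {n : ℕ}
    (J : Fin n → Y →L[ℂ] H)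
    (hJ : ∀ k l, adjoint (J k) ∘L J l = if k = l then 1 else 0) (T : H →L[ℂ] H)
    (M : Fin n → Y →L[ℂ] Y) (h1 : ∀ k y, T (J k y) = J k (M k y))
    (h2 : ∀ f, (∀ k, adjoint (J k) f = 0) → T f = 0) : T = diagOp J M := by
  ext f
  have h3 : T (f - ∑ k, J k (adjoint (J k) f)) = 0 := by
    apply h2
    intro l
    rw [map_sub, map_sum, Finset.sum_eq_single l, sub_eq_zero]
    · have := congrArg (fun A : Y →L[ℂ] Y => A (adjoint (J l) f)) (hJ l l)
      simp at this
      exact this.symm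
    · intro k _ hk
      have := congrArg (fun A : Y →L[ℂ] Y => A (adjoint (J k) f)) (hJ l k)
      simpa [hk.symm] using this
    · simp
  rw [map_sub, map_sum, sub_eq_zero] at h3
  rw [h3, diagOp, sum_apply]
  exact Finset.sum_congr rfl fun k _ => h1 k _

lemma T1_diag {n : ℕ} {φ : Fin n → ℝ → ℂ} (hφ : ∀ k, MemLp (φ k) 2 μ)
    (hφON : ∀ i j, ∫ x, star (φ i x) * φ j x ∂μ = if i = j then 1 else 0)
    (h : Fin n → ℝ → ℝ) (hm : ∀ k, Measurable (h k))
    (hb : ∀ k, ∃ C : ℝ, ∀ᵐ y ∂ν, |h k y| ≤ C)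
    (T : Lp ℂ 2 (μ.prod ν) →L[ℂ] Lp ℂ 2 (μ.prod ν)) (hsa : IsSelfAdjoint T)
    (hT : ∀ f : Lp ℂ 2 (μ.prod ν), ∀ᵐ z ∂(μ.prod ν),
        T f z = ∫ s, (∑ k, φ k z.1 * star (φ k s) * (h k z.2 : ℂ)) * f (s, z.2) ∂μ) :
    ∃ M : Fin n → Lp ℂ 2 ν →L[ℂ] Lp ℂ 2 ν, (∀ k, IsSelfAdjoint (M k)) ∧
      (∀ k g, M k g =ᵐ[ν] fun y => (h k y : ℂ) * g y) ∧
      T = diagOp (fun k => tens μ ν ((hφ k).toLp _)) M := by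
  set J : Fin n → Lp ℂ 2 ν →L[ℂ] Lp ℂ 2 (μ.prod ν) := fun k => tens μ ν ((hφ k).toLp _) with hJd
  have hJ : ∀ k l, adjoint (J k) ∘L J l = if k = l then 1 else 0 := by
    intro k l
    refine ContinuousLinearMap.ext fun v => ext_inner_left ℂ fun w => ?_
    rw [comp_apply, adjoint_inner_right]
    simp only [hJd, tens_inner, toLp_inner, hφON]
    split_ifs <;> simp
  have hTJ : ∀ k g, T (J k g) = J k ((memLp_bdd_mul (hm k) (hb k) g).toLp _) := by
    intro k g
    apply Lp.ext
    have h1 : ∀ᵐ y ∂ν, ∀ᵐ s ∂μ, (J k g) (s, y) = φ k s * g y := by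
      refine ae_swap (P := fun z => (J k g) z = φ k z.1 * g z.2) ?_
      have := tens_coe (hφ k) (Lp.memLp g)
      rwa [Lp.toLp_coeFn] at this
    filter_upwards [hT (J k g), form1 hφ h (J k g), ae_snd h1,
      tens_coe (hφ k) (memLp_bdd_mul (hm k) (hb k) g)] with z e1 e2 e3 e4
    rw [e1, e2, e4, Finset.sum_eq_single k]
    · have : ∫ s, star (φ k s) * (J k g) (s, z.2) ∂μ = g z.2 := by
        have : ∫ s, star (φ k s) * (J k g) (s, z.2) ∂μ = ∫ s, (star (φ k s) * φ k s) * g z.2 ∂μ := by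
          apply integral_congr_ae
          filter_upwards [e3] with s hs
          rw [hs]; ring
        rw [this, integral_mul_const, hφON]; simp
      rw [this]; ring
    · intro l _ hl
      have : ∫ s, star (φ l s) * (J k g) (s, z.2) ∂μ = 0 := by
        have : ∫ s, star (φ l s) * (J k g) (s, z.2) ∂μ = ∫ s, (star (φ l s) * φ k s) * g z.2 ∂μ := by
          apply integral_congr_ae
          filter_upwards [e3] with s hs
          rw [hs]; ring
        rw [this, integral_mul_const, hφON]; simp [hl]
      rw [this, mul_zero]
    · simp
  have hMg : ∀ k g, (adjoint (J k) ∘L T ∘L J k) g = (memLp_bdd_mul (hm k) (hb k) g).toLp _ := by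
    intro k g
    rw [comp_apply, comp_apply, hTJ, ← comp_apply, hJ]
    simp
  refine ⟨fun k => adjoint (J k) ∘L T ∘L J k, fun k => hsa.adjoint_conj (J k), ?_, ?_⟩
  · intro k g
    rw [hMg]
    exact MemLp.coeFn_toLp _
  · refine eq_diagOp J hJ T _ (fun k g => by rw [hMg, hTJ]) ?_
    intro f hf
    apply Lp.ext
    have h0 : ∀ᵐ y ∂ν, ∀ k, ∫ s, star (φ k s) * f (s, y) ∂μ = 0 := by
      refine ae_all_iff.2 fun k => cf_zero1 (hφ k) f fun g => ?_
      rw [← adjoint_inner_right]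
      change inner ℂ g (adjoint (J k) f) = (0:ℂ)
      rw [hf, inner_zero_right]
    filter_upwards [hT f, form1 hφ h f, ae_snd h0, Lp.coeFn_zero ℂ 2 (μ.prod ν)] with z e1 e2 e3 e4
    rw [e1, e2, e4]
    simp only [e3, mul_zero, Finset.sum_const_zero, Pi.zero_apply]

lemma T2_diag {n : ℕ} {φ : Fin n → ℝ → ℂ} (hφ : ∀ k, MemLp (φ k) 2 ν)
    (hφON : ∀ i j, ∫ x, star (φ i x) * φ j x ∂ν = if i = j then 1 else 0)
    (h : Fin n → ℝ → ℝ) (hm : ∀ k, Measurable (h k))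
    (hb : ∀ k, ∃ C : ℝ, ∀ᵐ y ∂μ, |h k y| ≤ C)
    (T : Lp ℂ 2 (μ.prod ν) →L[ℂ] Lp ℂ 2 (μ.prod ν)) (hsa : IsSelfAdjoint T)
    (hT : ∀ f : Lp ℂ 2 (μ.prod ν), ∀ᵐ z ∂(μ.prod ν),
        T f z = ∫ t, (∑ k, (h k z.1 : ℂ) * φ k z.2 * star (φ k t)) * f (z.1, t) ∂ν) :
    ∃ M : Fin n → Lp ℂ 2 μ →L[ℂ] Lp ℂ 2 μ, (∀ k, IsSelfAdjoint (M k)) ∧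
      (∀ k g, M k g =ᵐ[μ] fun y => (h k y : ℂ) * g y) ∧
      T = diagOp (fun k => (tens μ ν).flip ((hφ k).toLp _)) M := by
  set J : Fin n → Lp ℂ 2 μ →L[ℂ] Lp ℂ 2 (μ.prod ν) :=
    fun k => (tens μ ν).flip ((hφ k).toLp _) with hJd
  have hJ : ∀ k l, adjoint (J k) ∘L J l = if k = l then 1 else 0 := by
    intro k l
    refine ContinuousLinearMap.ext fun v => ext_inner_left ℂ fun w => ?_
    rw [comp_apply, adjoint_inner_right]
    simp only [hJd, flip_apply, tens_inner, toLp_inner, hφON]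
    split_ifs <;> simp
  have hTJ : ∀ k g, T (J k g) = J k ((memLp_bdd_mul (hm k) (hb k) g).toLp _) := by
    intro k g
    apply Lp.ext
    have h1 : ∀ᵐ y ∂μ, ∀ᵐ s ∂ν, (J k g) (y, s) = g y * φ k s := by
      have := tens_coe (Lp.memLp g) (hφ k)
      rw [Lp.toLp_coeFn] at this
      exact Measure.ae_ae_of_ae_prod this
    filter_upwards [hT (J k g), form2 hφ h (J k g), ae_fst h1,
      tens_coe (memLp_bdd_mul (hm k) (hb k) g) (hφ k)] with z e1 e2 e3 e4
    have e4' : (J k ((memLp_bdd_mul (hm k) (hb k) g).toLp _)) z =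
        ((h k z.1 : ℂ) * g z.1) * φ k z.2 := e4
    rw [e1, e2, e4', Finset.sum_eq_single k]
    · have : ∫ s, star (φ k s) * (J k g) (z.1, s) ∂ν = g z.1 := by
        have : ∫ s, star (φ k s) * (J k g) (z.1, s) ∂ν = ∫ s, (star (φ k s) * φ k s) * g z.1 ∂ν := by
          apply integral_congr_ae
          filter_upwards [e3] with s hs
          rw [hs]; ring
        rw [this, integral_mul_const, hφON]; simp
      rw [this]; ring
    · intro l _ hl
      have : ∫ s, star (φ l s) * (J k g) (z.1, s) ∂ν = 0 := by
        have : ∫ s, star (φ l s) * (J k g) (z.1, s) ∂ν = ∫ s, (star (φ l s) * φ k s) * g z.1 ∂ν := by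
          apply integral_congr_ae
          filter_upwards [e3] with s hs
          rw [hs]; ring
        rw [this, integral_mul_const, hφON]; simp [hl]
      rw [this, mul_zero]
    · simp
  have hMg : ∀ k g, (adjoint (J k) ∘L T ∘L J k) g = (memLp_bdd_mul (hm k) (hb k) g).toLp _ := by
    intro k g
    rw [comp_apply, comp_apply, hTJ, ← comp_apply, hJ]
    simp
  refine ⟨fun k => adjoint (J k) ∘L T ∘L J k, fun k => hsa.adjoint_conj (J k), ?_, ?_⟩
  · intro k g
    rw [hMg]
    exact MemLp.coeFn_toLp _
  · refine eq_diagOp J hJ T _ (fun k g => by rw [hMg, hTJ]) ?_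
    intro f hf
    apply Lp.ext
    have h0 : ∀ᵐ y ∂μ, ∀ k, ∫ s, star (φ k s) * f (y, s) ∂ν = 0 := by
      refine ae_all_iff.2 fun k => cf_zero2 (hφ k) f fun g => ?_
      change inner ℂ (J k g) f = (0:ℂ)
      rw [← adjoint_inner_right, hf, inner_zero_right]
    filter_upwards [hT f, form2 hφ h f, ae_fst h0, Lp.coeFn_zero ℂ 2 (μ.prod ν)] with z e1 e2 e3 e4
    rw [e1, e2, e4]
    simp only [e3, mul_zero, Finset.sum_const_zero, Pi.zero_apply]

/-- An infinite-dimensional space of functions supported in a set of positive measure. -/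
lemma exists_inf (a b : ℝ) (S : Set ℝ) (hS : MeasurableSet S) (hpos : 0 < muI a b S) :
    ∃ V : Submodule ℂ (Lp ℂ 2 (muI a b)), ¬ FiniteDimensional ℂ V ∧
      ∀ g ∈ V, ∀ᵐ x ∂(muI a b), x ∉ S → g x = 0 := by
  have hmem : ∀ q : Polynomial ℂ,
      MemLp (S.indicator fun x : ℝ => q.eval (x : ℂ)) 2 (muI a b) := by
    intro q
    have hc : Continuous fun x : ℝ => q.eval (x : ℂ) := by fun_prop
    obtain ⟨C, hC⟩ := (isCompact_Icc (a := a) (b := b)).exists_bound_of_continuousOn hc.continuousOn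
    refine MemLp.indicator hS (MemLp.of_bound hc.aestronglyMeasurable C ?_)
    filter_upwards [ae_restrict_mem measurableSet_Icc] with x hx
    exact hC x hx
  let L : Polynomial ℂ →ₗ[ℂ] Lp ℂ 2 (muI a b) :=
    { toFun := fun q => (hmem q).toLp _
      map_add' := fun q r => by
        rw [← MemLp.toLp_add]
        congr 1
        funext x
        by_cases h : x ∈ S <;> simp [h]
      map_smul' := fun c q => by
        rw [RingHom.id_apply, ← MemLp.toLp_const_smul]
        congr 1
        funext x
        by_cases h : x ∈ S <;> simp [h] }
  have hLc : ∀ q, L q =ᵐ[muI a b] S.indicator fun x : ℝ => q.eval (x : ℂ) :=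
    fun q => (hmem q).coeFn_toLp
  have hinj : Function.Injective L := by
    rw [injective_iff_map_eq_zero]
    intro q hq
    by_contra hne
    have h1 : ∀ᵐ x ∂(muI a b), x ∉ S ∪ (∅ : Set ℝ) := by
      have hfin : {x : ℝ | q.eval (x : ℂ) = 0}.Finite := by
        refine Set.Finite.preimage (f := fun x : ℝ => (x : ℂ)) (s := {w | q.eval w = 0})
          (Complex.ofReal_injective.injOn) ?_
        exact Polynomial.finite_setOfPred_isRoot hne
      have h2 : ∀ᵐ x ∂(muI a b), x ∉ {x : ℝ | q.eval (x : ℂ) = 0} :=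
        measure_eq_zero_iff_ae_notMem.1 (hfin.measure_zero _)
      have h3 := hLc q
      rw [hq] at h3
      filter_upwards [h2, h3, Lp.coeFn_zero ℂ 2 (muI a b)] with x e1 e2 e3
      rw [e3] at e2
      intro hx
      apply e1
      simp at hx
      simpa [hx] using e2.symm
    rw [Set.union_empty, ← measure_eq_zero_iff_ae_notMem] at h1
    exact hpos.ne' h1
  refine ⟨LinearMap.range L, ?_, ?_⟩
  · intro hfd
    have : FiniteDimensional ℂ (Polynomial ℂ) :=
      FiniteDimensional.of_injective L.rangeRestrict
        (fun x y hxy => hinj (congrArg Subtype.val hxy))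
    exact Polynomial.not_finite this
  · rintro _ ⟨q, rfl⟩
    filter_upwards [hLc q] with x hx hxS
    rw [hx]; simp [hxS]

lemma not_finDim (a b : ℝ) (hab : a < b) : ¬ FiniteDimensional ℂ (Lp ℂ 2 (muI a b)) := by
  obtain ⟨V, hV, -⟩ := exists_inf a b Set.univ MeasurableSet.univ (by simp [hab])
  intro h
  exact hV inferInstance

lemma approxInf_of_mem (a b : ℝ) (h : ℝ → ℝ) (hm : Measurable h)
    (M : Lp ℂ 2 (muI a b) →L[ℂ] Lp ℂ 2 (muI a b))
    (hM : ∀ g, M g =ᵐ[muI a b] fun y => (h y : ℂ) * g y) (l : ℝ)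
    (hl : l ∈ Essran (muI a b) h) : ApproxInf M (l : ℂ) := by
  intro ε hε
  have hS : MeasurableSet {x | l - ε < h x ∧ h x < l + ε} :=
    (measurableSet_lt measurable_const hm).inter (measurableSet_lt hm measurable_const)
  obtain ⟨V, hV, hVS⟩ := exists_inf a b _ hS (hl ε hε)
  refine ⟨V, hV, fun g hg => ?_⟩
  refine Lp.norm_le_mul_norm_of_ae_le_mul ?_
  filter_upwards [hM g, hVS g hg, Lp.coeFn_sub (M g) ((l:ℂ) • g), Lp.coeFn_smul (l:ℂ) g]
    with x e1 e2 e3 e4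
  rw [e3, Pi.sub_apply, e4, e1, Pi.smul_apply, smul_eq_mul, ← sub_mul, norm_mul]
  by_cases hx : l - ε < h x ∧ h x < l + ε
  · refine mul_le_mul_of_nonneg_right ?_ (norm_nonneg _)
    rw [← Complex.ofReal_sub, Complex.norm_real, Real.norm_eq_abs, abs_le]
    constructor <;> linarith [hx.1, hx.2]
  · rw [e2 hx]; simp

lemma isUnit_of_notMem (a b : ℝ) (h : ℝ → ℝ)
    (M : Lp ℂ 2 (muI a b) →L[ℂ] Lp ℂ 2 (muI a b)) (hsa : IsSelfAdjoint M)
    (hM : ∀ g, M g =ᵐ[muI a b] fun y => (h y : ℂ) * g y) (l : ℝ)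
    (hl : l ∉ Essran (muI a b) h) : IsUnit (M - (l : ℂ) • 1) := by
  simp only [Essran, Set.mem_setOf_eq, not_forall, not_lt, nonpos_iff_eq_zero] at hl
  obtain ⟨ε, hε, h0⟩ := hl
  have hA : IsSelfAdjoint (M - (l : ℂ) • (1 : Lp ℂ 2 (muI a b) →L[ℂ] Lp ℂ 2 (muI a b))) := by
    refine hsa.sub ?_
    rw [isSelfAdjoint_iff, star_smul]; simp
  have hbd : ∀ g, ‖g‖ ≤ ε⁻¹ * ‖(M - (l : ℂ) • 1) g‖ := by
    intro g
    refine Lp.norm_le_mul_norm_of_ae_le_mul ?_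
    filter_upwards [hM g, measure_eq_zero_iff_ae_notMem.1 h0, Lp.coeFn_sub (M g) ((l:ℂ) • g),
      Lp.coeFn_smul (l:ℂ) g] with x e1 e2 e3 e4
    change _ ≤ ε⁻¹ * ‖(M g - (l:ℂ) • g : Lp ℂ 2 (muI a b)) x‖
    rw [e3, Pi.sub_apply, e4, e1, Pi.smul_apply, smul_eq_mul, ← sub_mul, norm_mul,
      ← Complex.ofReal_sub, Complex.norm_real, Real.norm_eq_abs, ← mul_assoc]
    refine le_mul_of_one_le_left (norm_nonneg _) ?_
    rw [← div_eq_inv_mul, one_le_div hε, le_abs]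
    by_contra hcon
    rw [not_or, not_le, not_le] at hcon
    exact e2 ⟨by linarith [hcon.2], by linarith [hcon.1]⟩
  rw [ContinuousLinearMap.isUnit_iff_bijective, bijective_iff_dense_range_and_antilipschitz]
  constructor
  · rw [Submodule.topologicalClosure_eq_top_iff, orthogonal_range, hA.adjoint_eq,
      Submodule.eq_bot_iff]
    intro g hg
    have hg0 : (M - (l : ℂ) • 1) g = 0 := hg
    have := hbd g
    rw [hg0, norm_zero, mul_zero] at this
    exact norm_le_zero_iff.1 this
  · refine ⟨⟨ε⁻¹, by positivity⟩, ?_⟩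
    exact ContinuousLinearMap.antilipschitz_of_bound _ hbd

end concretePart

theorem statement19
    (a b c d : ℝ) (hab : a < b) (hcd : c < d)
    (n : ℕ) (hn : 1 ≤ n)
    (φ : Fin n → ℝ → ℂ)
    (hφL2 : ∀ k, MemLp (φ k) 2 (muI a b))
    (hφON : ∀ i j, ∫ x, star (φ i x) * φ j x ∂(muI a b) = if i = j then 1 else 0)
    (h : Fin n → ℝ → ℝ)
    (hhmeas : ∀ k, Measurable (h k))
    (hhbdd : ∀ k, ∃ C : ℝ, ∀ᵐ y ∂(muI c d), |h k y| ≤ C)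
    (m : ℕ) (hm : 1 ≤ m)
    (ψ : Fin m → ℝ → ℂ)
    (hψL2 : ∀ j, MemLp (ψ j) 2 (muI c d))
    (hψON : ∀ i j, ∫ y, star (ψ i y) * ψ j y ∂(muI c d) = if i = j then 1 else 0)
    (p : Fin m → ℝ → ℝ)
    (hpmeas : ∀ j, Measurable (p j))
    (hpbdd : ∀ j, ∃ C : ℝ, ∀ᵐ x ∂(muI a b), |p j x| ≤ C)
    (T1 T2 : Lp ℂ 2 ((muI a b).prod (muI c d)) →L[ℂ] Lp ℂ 2 ((muI a b).prod (muI c d)))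
    (hT1sa : IsSelfAdjoint T1) (hT2sa : IsSelfAdjoint T2)
    (hT1 : ∀ f : Lp ℂ 2 ((muI a b).prod (muI c d)),
      ∀ᵐ z ∂((muI a b).prod (muI c d)),
        T1 f z = ∫ s, (∑ k, φ k z.1 * star (φ k s) * (h k z.2 : ℂ)) * f (s, z.2) ∂(muI a b))
    (hT2 : ∀ f : Lp ℂ 2 ((muI a b).prod (muI c d)),
      ∀ᵐ z ∂((muI a b).prod (muI c d)),
        T2 f z = ∫ t, (∑ j, (p j z.1 : ℂ) * ψ j z.2 * star (ψ j t)) * f (z.1, t) ∂(muI c d))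
    :
    essentialSpectrum (T1 + T2) =
      {0} ∪ (⋃ i : Fin n, (fun r : ℝ => (r : ℂ)) '' Essran (muI c d) (h i)) ∪
        (⋃ j : Fin m, (fun r : ℝ => (r : ℂ)) '' Essran (muI a b) (p j)) := by
  obtain ⟨M, hMsa, hM, hT1d⟩ := T1_diag hφL2 hφON h hhmeas hhbdd T1 hT1sa hT1
  obtain ⟨Q, hQsa, hQ, hT2d⟩ := T2_diag hψL2 hψON p hpmeas hpbdd T2 hT2sa hT2
  refine abstract_main (tens (muI a b) (muI c d)) tens_inner (not_finDim a b hab)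
    (not_finDim c d hcd) (fun k => (hφL2 k).toLp _) (fun k => (hψL2 k).toLp _)
    (fun i j => by rw [toLp_inner, hφON]) (fun i j => by rw [toLp_inner, hψON])
    M Q T1 T2 hT1d hT2d hT1sa hT2sa _ _ ?_ ?_ ?_ ?_
  · exact fun k l hl => approxInf_of_mem c d (h k) (hhmeas k) (M k) (hM k) l hl
  · exact fun k l hl => isUnit_of_notMem c d (h k) (M k) (hMsa k) (hM k) l hl
  · exact fun k l hl => approxInf_of_mem a b (p k) (hpmeas k) (Q k) (hQ k) l hl
  · exact fun k l hl => isUnit_of_notMem a b (p k) (Q k) (hQsa k) (hQ k) l hl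
end
end
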